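/- arXiv:1602.01133 — 5 statements merged into one kernel-verified Lean document; each statement's English description precedes it below -/
import Mathlib

section
/- Every non-negative integer n can be written in the form a(2a-1) + b(2b-1) + c(2c+1) + d(2d+1) for some non-negative integers a, b, c, d. -/
/-- A positive integer `m ≡ 1, 2 (mod 4)` is a square modulo some prime `p ≡ 1 (mod 4)`
with `p ≡ -1 (mod m)`. -/
theorem exists_prime_isSquare_of_mod_four {m : ℕ} (hm : m % 4 = 1 ∨ m % 4 = 2) :
    ∃ p : ℕ, p.Prime ∧ p % 4 = 1 ∧ m < p ∧ m ∣ p + 1 ∧ IsSquare ((m : ℤ) : ZMod p) := by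
  have hm0 : 0 < m := by omega
  rcases hm with hm | hm
  · have hc : IsCoprime (2 * (m : ℤ) - 1) ((4 * m : ℕ) : ℤ) :=
      ⟨2 * m - 1, -(m - 1), by push_cast; ring⟩
    obtain ⟨p, hgt, hp, hmod⟩ := Nat.forall_exists_prime_gt_and_zmodEq m (by omega) hc
    obtain ⟨k, hk⟩ := hmod.symm.dvd
    push_cast at hk
    have hp4 : p % 4 = 1 := by
      have : (p : ℤ) = 4 * (m * k) + 2 * m - 1 := by linarith
      omega
    have hdvd : (m : ℤ) ∣ p + 1 := ⟨4 * k + 2, by linarith⟩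
    refine ⟨p, hp, hp4, hgt, by exact_mod_cast hdvd, ?_⟩
    have := Fact.mk hp
    apply ZMod.isSquare_of_jacobiSym_eq_one
    have hodd : Odd m := Nat.odd_iff.2 (by omega)
    rw [jacobiSym.quadratic_reciprocity_one_mod_four' hodd hp4,
      jacobiSym.mod_left' (a₂ := -1) (Int.emod_eq_emod_iff_emod_sub_eq_zero.2
          (Int.emod_eq_zero_of_dvd (by simpa using hdvd))),
      jacobiSym.at_neg_one hodd, ZMod.χ₄_nat_one_mod_four hm]
  · obtain ⟨k, rfl⟩ : ∃ k, m = 2 * k := ⟨m / 2, by omega⟩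
    obtain ⟨j, rfl⟩ : ∃ j, k = 2 * j + 1 := ⟨k / 2, by omega⟩
    have hc : IsCoprime (((2 * (2 * j + 1) : ℕ) : ℤ) - 1) ((4 * (2 * (2 * j + 1)) : ℕ) : ℤ) :=
      ⟨((2 * (2 * j + 1) : ℕ) : ℤ) - 1, -j, by push_cast; ring⟩
    obtain ⟨p, hgt, hp, hmod⟩ :=
      Nat.forall_exists_prime_gt_and_zmodEq (2 * (2 * j + 1)) (by omega) hc
    obtain ⟨l, hl⟩ := hmod.symm.dvd
    push_cast at hl
    have hl' : (p : ℤ) = 8 * ((2 * j + 1) * l) + 4 * j + 1 := by linarith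
    have hp4 : p % 4 = 1 := by omega
    have hdvd : (2 * (2 * j + 1) : ℤ) ∣ p + 1 := ⟨4 * l + 1, by linarith⟩
    have hdvd' : ((2 * j + 1 : ℕ) : ℤ) ∣ p - (-1) := by
      push_cast
      simpa using (Dvd.intro_left _ rfl).trans hdvd
    refine ⟨p, hp, hp4, hgt, by exact_mod_cast hdvd, ?_⟩
    have := Fact.mk hp
    apply ZMod.isSquare_of_jacobiSym_eq_one
    have hodd : Odd (2 * j + 1) := ⟨j, rfl⟩
    rw [Nat.cast_mul, jacobiSym.mul_left,
      jacobiSym.quadratic_reciprocity_one_mod_four' hodd hp4,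
      jacobiSym.mod_left' (a₂ := -1) (Int.emod_eq_emod_iff_emod_sub_eq_zero.2
          (Int.emod_eq_zero_of_dvd hdvd')),
      jacobiSym.at_neg_one hodd, Nat.cast_two, jacobiSym.at_two (Nat.odd_iff.2 (by omega)),
      ZMod.χ₄_nat_eq_if_mod_four, ZMod.χ₈_nat_eq_if_mod_eight]
    split_ifs <;> first | rfl | omega

/-- A small solution of the congruence `z² + p u² ≡ m w² (mod p m)`, found by the
pigeonhole principle. -/
theorem exists_small_congruence_solution {m p : ℕ} (hm : 0 < m) (hp : 0 < p) (r : ℤ) :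
    ∃ z u w : ℤ, (z ≠ 0 ∨ u ≠ 0 ∨ w ≠ 0) ∧ (p : ℤ) ∣ z - r * w ∧ (m : ℤ) ∣ z - u ∧
      z ^ 2 ≤ m * p ∧ u ^ 2 ≤ m ∧ w ^ 2 ≤ p := by
  have : NeZero m := ⟨hm.ne'⟩
  have : NeZero p := ⟨hp.ne'⟩
  let R := fun k : ℕ => Finset.range (k.sqrt + 1)
  let s := R (m * p) ×ˢ R m ×ˢ R p
  let f : ℕ × ℕ × ℕ → ZMod p × ZMod m := fun t =>
    (((t.1 - r * t.2.2 : ℤ) : ZMod p), ((t.1 - t.2.1 : ℤ) : ZMod m))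
  have hcard : (Finset.univ : Finset (ZMod p × ZMod m)).card < s.card := by
    simp only [s, R, Finset.card_product, Finset.card_range, Finset.card_univ,
      Fintype.card_prod, ZMod.card]
    have h₁ := Nat.lt_succ_sqrt' (m * p)
    have h₂ := Nat.lt_succ_sqrt' m
    have h₃ := Nat.lt_succ_sqrt' p
    simp only [Nat.succ_eq_add_one] at h₁ h₂ h₃
    apply lt_of_pow_lt_pow_left₀ 2 (Nat.zero_le _)
    calc (p * m) ^ 2 = m * p * (m * p) := by ring
      _ < ((m * p).sqrt + 1) ^ 2 * ((m.sqrt + 1) ^ 2 * (p.sqrt + 1) ^ 2) := by gcongr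
      _ = _ := by ring
  obtain ⟨⟨z₁, u₁, w₁⟩, h₁, ⟨z₂, u₂, w₂⟩, h₂, hne, heq⟩ :=
    Finset.exists_ne_map_eq_of_card_lt_of_maps_to hcard (f := f) (by simp)
  have bound {k a b : ℕ} (ha : a ∈ R k) (hb : b ∈ R k) : ((a : ℤ) - b) ^ 2 ≤ k := by
    simp only [R, Finset.mem_range] at ha hb
    have : (k.sqrt : ℤ) ^ 2 ≤ k := by exact_mod_cast Nat.sqrt_le' k
    exact (sq_le_sq.2 (by rw [abs_le, Nat.abs_cast]; constructor <;> omega)).trans this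
  simp only [s, Finset.mem_product] at h₁ h₂
  simp only [f, Prod.mk.injEq, ZMod.intCast_eq_intCast_iff_dvd_sub] at heq
  refine ⟨z₂ - z₁, u₂ - u₁, w₂ - w₁, ?_, ?_, ?_, ?_, bound h₂.2.1 h₁.2.1, bound h₂.2.2 h₁.2.2⟩
  · by_contra! h
    apply hne
    simp only [Prod.mk.injEq]
    omega
  · convert heq.1 using 1; ring
  · convert heq.2 using 1; ring
  · exact_mod_cast bound h₂.1 h₁.1

/-- Legendre-type solvability of `t² m = x² + p y²`. -/
theorem exists_sq_mul_eq_sq_add_mul_sq {m p : ℕ} (hm : 0 < m) (hp : p.Prime) (hlt : m < p)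
    (hdvd : m ∣ p + 1) (hsq : IsSquare ((m : ℤ) : ZMod p)) :
    ∃ t x y : ℤ, 0 < t ∧ t ^ 2 * m = x ^ 2 + p * y ^ 2 := by
  obtain ⟨r, hr⟩ : ∃ r : ℤ, (p : ℤ) ∣ r ^ 2 - m := by
    obtain ⟨s, hs⟩ := hsq
    obtain ⟨r, rfl⟩ := ZMod.intCast_surjective s
    refine ⟨r, (ZMod.intCast_eq_intCast_iff_dvd_sub _ _ _).1 ?_⟩
    rw [hs]; push_cast; ring
  obtain ⟨z, u, w, hne, hzp, hzm, hz, hu, hw⟩ := exists_small_congruence_solution hm hp.pos r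
  have hm' : (0 : ℤ) < m := by exact_mod_cast hm
  have hp' : (0 : ℤ) < p := by exact_mod_cast hp.pos
  have hdvd' : (m : ℤ) ∣ p + 1 := by exact_mod_cast hdvd
  have hndvd : ¬ (p : ℤ) ∣ m := fun h =>
    absurd (Nat.le_of_dvd hm (by exact_mod_cast h)) (by omega)
  have hpp : Prime (p : ℤ) := Nat.prime_iff_prime_int.1 hp
  have hcop : IsCoprime (p : ℤ) m := (hpp.coprime_iff_not_dvd).2 hndvd
  have hQp : (p : ℤ) ∣ z ^ 2 + p * u ^ 2 - m * w ^ 2 := by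
    have h : z ^ 2 + p * u ^ 2 - m * w ^ 2 =
        (z - r * w) * (z + r * w) + (r ^ 2 - m) * w ^ 2 + p * u ^ 2 := by ring
    rw [h]
    exact ((hzp.mul_right _).add (hr.mul_right _)).add (dvd_mul_right _ _)
  have hQm : (m : ℤ) ∣ z ^ 2 + p * u ^ 2 - m * w ^ 2 := by
    have h : z ^ 2 + p * u ^ 2 - m * w ^ 2 =
        (z - u) * (z + u) + (p + 1) * u ^ 2 - m * w ^ 2 := by ring
    rw [h]
    exact ((hzm.mul_right _).add (hdvd'.mul_right _)).sub (dvd_mul_right _ _)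
  obtain ⟨k, hk⟩ := hcop.mul_dvd hQp hQm
  have hpm : (0 : ℤ) < p * m := mul_pos hp' hm'
  have hpu : (p : ℤ) * u ^ 2 ≤ p * m := mul_le_mul_of_nonneg_left hu hp'.le
  have hmw : (m : ℤ) * w ^ 2 ≤ m * p := mul_le_mul_of_nonneg_left hw hm'.le
  have hpu0 : 0 ≤ (p : ℤ) * u ^ 2 := by positivity
  have hmw0 : 0 ≤ (m : ℤ) * w ^ 2 := by positivity
  have hk₁ : -1 ≤ k := by
    by_contra! h
    nlinarith [sq_nonneg z]
  have hk₂ : k ≤ 2 := by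
    by_contra! h
    nlinarith
  obtain rfl | rfl | rfl | rfl : k = -1 ∨ k = 0 ∨ k = 1 ∨ k = 2 := by omega
  · exfalso
    have hwp : (m : ℤ) * w ^ 2 = m * p := by nlinarith [sq_nonneg z]
    apply hpp.irreducible.not_isSquare
    exact ⟨w, by rw [← sq]; exact (mul_left_cancel₀ hm'.ne' hwp).symm⟩
  · have hw0 : w ≠ 0 := by
      rintro rfl
      have hz0 : z ^ 2 = 0 := by nlinarith [sq_nonneg z]
      have hu0 : (p : ℤ) * u ^ 2 = 0 := by nlinarith [sq_nonneg z]
      simp_all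
    exact ⟨|w|, z, u, abs_pos.2 hw0, by rw [sq_abs]; linarith⟩
  · refine ⟨w ^ 2 + p, z * w - p * u, z + u * w, by positivity, ?_⟩
    linear_combination (-(w ^ 2 + p : ℤ)) * hk
  · exfalso
    have hzp' : z ^ 2 = m * p := by linarith
    obtain ⟨y, rfl⟩ := hpp.dvd_of_dvd_pow (Dvd.intro_left _ hzp'.symm)
    exact hndvd ⟨y ^ 2, mul_left_cancel₀ hp'.ne' (by linarith)⟩

/-- An integer within half a unit of `x / t`. -/
theorem exists_sub_mul_sq_le {t : ℤ} (ht : 0 < t) (x : ℤ) :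
    ∃ y : ℤ, 4 * (x - t * y) ^ 2 ≤ t ^ 2 := by
  refine ⟨(2 * x + t) / (2 * t), ?_⟩
  have h₁ := Int.mul_ediv_add_emod (2 * x + t) (2 * t)
  have h₂ := Int.emod_nonneg (2 * x + t) (b := 2 * t) (by omega)
  have h₃ := Int.emod_lt_of_pos (2 * x + t) (b := 2 * t) (by omega)
  set y := (2 * x + t) / (2 * t)
  nlinarith

/-- Davenport–Cassels descent: an integer that is a sum of three rational squares is a sum of
three integer squares. -/
theorem exists_sum_three_sq_of_sq_mul {m : ℤ} (t : ℕ) (ht : 0 < t) {x y z : ℤ}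
    (h : (t : ℤ) ^ 2 * m = x ^ 2 + y ^ 2 + z ^ 2) :
    ∃ a b c : ℤ, m = a ^ 2 + b ^ 2 + c ^ 2 := by
  induction t using Nat.strong_induction_on generalizing x y z with
  | _ t ih =>
    have ht' : (0 : ℤ) < t := by exact_mod_cast ht
    obtain ⟨a, ha⟩ := exists_sub_mul_sq_le ht' x
    obtain ⟨b, hb⟩ := exists_sub_mul_sq_le ht' y
    obtain ⟨c, hc⟩ := exists_sub_mul_sq_le ht' z
    set A := a ^ 2 + b ^ 2 + c ^ 2 - m with hA
    set B := 2 * (m * t - (x * a + y * b + z * c)) with hB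
    have key : t * (A * t + B) = (x - t * a) ^ 2 + (y - t * b) ^ 2 + (z - t * c) ^ 2 := by
      rw [hA, hB]; linear_combination h
    have hlt : A * t + B < t := by nlinarith
    have hnonneg : 0 ≤ A * t + B := by
      by_contra! hneg
      nlinarith [sq_nonneg (x - t * a), sq_nonneg (y - t * b), sq_nonneg (z - t * c)]
    obtain hzero | hpos := hnonneg.eq_or_lt
    · refine ⟨a, b, c, ?_⟩
      rw [← hzero, mul_zero] at key
      have hx : x - t * a = 0 := by
        nlinarith [sq_nonneg (x - t * a), sq_nonneg (y - t * b), sq_nonneg (z - t * c)]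
      have hy : y - t * b = 0 := by
        nlinarith [sq_nonneg (x - t * a), sq_nonneg (y - t * b), sq_nonneg (z - t * c)]
      have hz : z - t * c = 0 := by
        nlinarith [sq_nonneg (x - t * a), sq_nonneg (y - t * b), sq_nonneg (z - t * c)]
      obtain rfl := sub_eq_zero.1 hx
      obtain rfl := sub_eq_zero.1 hy
      obtain rfl := sub_eq_zero.1 hz
      exact mul_left_cancel₀ (pow_ne_zero 2 ht'.ne') (by linarith)
    · lift A * t + B to ℕ using hnonneg with t' ht'eq
      refine ih t' (by exact_mod_cast hlt) (by exact_mod_cast hpos)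
        (x := A * x + B * a) (y := A * y + B * b) (z := A * z + B * c) ?_
      rw [ht'eq]
      linear_combination A ^ 2 * h + B ^ 2 * hA - A * B * hB

/-- Every natural number `m ≡ 1, 2 (mod 4)` is a sum of three squares. -/
theorem exists_sum_three_sq {m : ℕ} (hm : m % 4 = 1 ∨ m % 4 = 2) :
    ∃ a b c : ℤ, (m : ℤ) = a ^ 2 + b ^ 2 + c ^ 2 := by
  obtain ⟨p, hp, hp4, hlt, hdvd, hsq⟩ := exists_prime_isSquare_of_mod_four hm
  obtain ⟨t, x, y, ht, h⟩ := exists_sq_mul_eq_sq_add_mul_sq (by omega) hp hlt hdvd hsq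
  have := Fact.mk hp
  obtain ⟨a, b, hab⟩ := Nat.Prime.sq_add_sq (p := p) (by omega)
  lift t to ℕ using ht.le
  refine exists_sum_three_sq_of_sq_mul t (by exact_mod_cast ht) (x := x) (y := a * y)
    (z := b * y) ?_
  rw [h, ← hab]
  push_cast
  ring

/-- A square lying in the upper part of `[0, 2 n + 1]` whose root has the parity of `n`. -/
theorem exists_large_sq_same_parity {n : ℕ} (hn : 36 ≤ n) :
    ∃ p : ℕ, p % 2 = n % 2 ∧ p ^ 2 ≤ 2 * n + 1 ∧ 3 * (2 * n + 1) < 4 * p ^ 2 + 6 * p + 9 := by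
  have h₁ := Nat.sqrt_le' (2 * n + 1)
  have h₂ := Nat.lt_succ_sqrt' (2 * n + 1)
  rw [Nat.succ_eq_add_one] at h₂
  have h₃ : 8 ≤ (2 * n + 1).sqrt := Nat.le_sqrt'.2 (by omega)
  generalize (2 * n + 1).sqrt = s at h₁ h₂ h₃
  by_cases hs : s % 2 = n % 2
  · exact ⟨s, hs, h₁, by nlinarith⟩
  · obtain ⟨q, rfl⟩ : ∃ q, s = q + 1 := ⟨s - 1, by omega⟩
    exact ⟨q, by omega, by nlinarith, by nlinarith⟩

theorem cast_mul_two_mul_sub_one (a : ℕ) :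
    (a : ℤ) * (2 * a - 1 : ℕ) = a * (2 * a - 1) := by
  cases a with
  | zero => simp
  | succ a =>
    rw [Nat.cast_sub (by omega)]
    push_cast
    ring

theorem neg_lt_add_of_three_mul_sq_lt {s x y z : ℤ} (hs : 0 ≤ s)
    (h : 3 * (x ^ 2 + y ^ 2 + z ^ 2) < s ^ 2) : -s < x + y + z :=
  (abs_lt_of_sq_lt_sq' (by nlinarith [sq_nonneg (x - y), sq_nonneg (y - z), sq_nonneg (x - z)])
    hs).1

/-- The change of variables turning a suitable four square representation of `2 n + 1`
into hexagonal numbers. -/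
theorem exists_hexagonal_of_four_dvd {n : ℕ} {p q r t : ℤ} (hp : 0 ≤ p)
    (h : 2 * (n : ℤ) + 1 = p ^ 2 + (q ^ 2 + r ^ 2 + t ^ 2))
    (hbound : 3 * (2 * (n : ℤ) + 1) < 4 * p ^ 2 + 6 * p + 9)
    (hpq : p % 2 = q % 2) (hpr : p % 2 = r % 2) (h4 : 4 ∣ p + q + r + t + 1) :
    ∃ a b c d : ℕ,
      n = a * (2 * a - 1) + b * (2 * b - 1) + c * (2 * c + 1) + d * (2 * d + 1) := by
  have hs : 3 * (q ^ 2 + r ^ 2 + t ^ 2) < (p + 3) ^ 2 := by nlinarith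
  have hs₀ : 0 ≤ p + 3 := by omega
  have h₁ := neg_lt_add_of_three_mul_sq_lt hs₀ hs
  have h₂ := neg_lt_add_of_three_mul_sq_lt (x := -q) (y := -r) (z := t) hs₀ (by simpa using hs)
  have h₃ := neg_lt_add_of_three_mul_sq_lt (x := q) (y := -r) (z := -t) hs₀ (by simpa using hs)
  have h₄ := neg_lt_add_of_three_mul_sq_lt (x := -q) (y := r) (z := -t) hs₀ (by simpa using hs)
  obtain ⟨a, ha⟩ : ∃ a : ℕ, 4 * (a : ℤ) = p + q + r + t + 1 :=
    ⟨((p + q + r + t + 1) / 4).toNat, by omega⟩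
  obtain ⟨b, hb⟩ : ∃ b : ℕ, 4 * (b : ℤ) = p - q - r + t + 1 :=
    ⟨((p - q - r + t + 1) / 4).toNat, by omega⟩
  obtain ⟨c, hc⟩ : ∃ c : ℕ, 4 * (c : ℤ) = p + q - r - t - 1 :=
    ⟨((p + q - r - t - 1) / 4).toNat, by omega⟩
  obtain ⟨d, hd⟩ : ∃ d : ℕ, 4 * (d : ℤ) = p - q + r - t - 1 :=
    ⟨((p - q + r - t - 1) / 4).toNat, by omega⟩
  refine ⟨a, b, c, d, ?_⟩
  zify
  rw [cast_mul_two_mul_sub_one, cast_mul_two_mul_sub_one]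
  obtain rfl : p = a + b + c + d := by linarith
  obtain rfl : q = a - b + c - d := by linarith
  obtain rfl : r = a - b - c + d := by linarith
  obtain rfl : t = a + b - c - d - 1 := by linarith
  linarith

theorem exists_hexagonal_of_sum_sq {n : ℕ} {p q r t : ℤ} (hp : 0 ≤ p)
    (h : 2 * (n : ℤ) + 1 = p ^ 2 + (q ^ 2 + r ^ 2 + t ^ 2))
    (hbound : 3 * (2 * (n : ℤ) + 1) < 4 * p ^ 2 + 6 * p + 9)
    (hpq : p % 2 = q % 2) (hpr : p % 2 = r % 2) (hpt : p % 2 ≠ t % 2) :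
    ∃ a b c d : ℕ,
      n = a * (2 * a - 1) + b * (2 * b - 1) + c * (2 * c + 1) + d * (2 * d + 1) := by
  by_cases h4 : 4 ∣ p + q + r + t + 1
  · exact exists_hexagonal_of_four_dvd hp h hbound hpq hpr h4
  · rcases Int.emod_two_eq_zero_or_one p with hp2 | hp2
    · exact exists_hexagonal_of_four_dvd (t := -t) hp (by simpa using h) hbound hpq hpr (by omega)
    · exact exists_hexagonal_of_four_dvd (q := -q) hp (by simpa using h) hbound (by omega) hpr
        (by omega)

theorem Int.sq_emod_four (x : ℤ) : x ^ 2 % 4 = x % 2 := by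
  obtain ⟨k, rfl | rfl⟩ := x.even_or_odd'
  · rw [show (2 * k) ^ 2 = 4 * k ^ 2 by ring]; omega
  · rw [show (2 * k + 1) ^ 2 = 4 * (k ^ 2 + k) + 1 by ring]; omega

theorem stmt_0 (n : ℕ) :
    ∃ a b c d : ℕ,
      n = a * (2 * a - 1) + b * (2 * b - 1) + c * (2 * c + 1) + d * (2 * d + 1) := by
  obtain hn | hn := lt_or_ge n 36
  · have small : ∀ n < 36, ∃ a < 5, ∃ b < 5, ∃ c < 5, ∃ d < 5,
        n = a * (2 * a - 1) + b * (2 * b - 1) + c * (2 * c + 1) + d * (2 * d + 1) := by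
      decide +kernel
    obtain ⟨a, -, b, -, c, -, d, -, h⟩ := small n hn
    exact ⟨a, b, c, d, h⟩
  · obtain ⟨p, hpar, hle, hbound⟩ := exists_large_sq_same_parity hn
    have hp4 := Int.sq_emod_four p
    have hm : (2 * n + 1 - p ^ 2) % 4 = 1 ∨ (2 * n + 1 - p ^ 2) % 4 = 2 := by
      have : p ^ 2 % 4 = p % 2 := by exact_mod_cast hp4
      omega
    obtain ⟨x, y, z, h⟩ := exists_sum_three_sq hm
    rw [Nat.cast_sub hle] at h
    push_cast at h
    zify at hbound hpar
    have hp0 : (0 : ℤ) ≤ p := by positivity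
    have hx := Int.sq_emod_four x
    have hy := Int.sq_emod_four y
    have hz := Int.sq_emod_four z
    have hcases : (p % 2 = y % 2 ∧ p % 2 = z % 2 ∧ (p : ℤ) % 2 ≠ x % 2) ∨
        (p % 2 = x % 2 ∧ p % 2 = z % 2 ∧ (p : ℤ) % 2 ≠ y % 2) ∨
        (p % 2 = x % 2 ∧ p % 2 = y % 2 ∧ (p : ℤ) % 2 ≠ z % 2) := by
      omega
    rcases hcases with ⟨h₁, h₂, h₃⟩ | ⟨h₁, h₂, h₃⟩ | ⟨h₁, h₂, h₃⟩ <;>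
      exact exists_hexagonal_of_sum_sq hp0 (by linarith) hbound h₁ h₂ h₃
end

section
/- Every non-negative integer n can be written in the form 2a(2a-1) + b(2b-1) + 2c(2c+1) + d(2d+1) for some non-negative integers a, b, c, d. -/
/-- A positive definite binary form takes, at a primitive vector, a value bounded in terms of its
determinant; the vector is given together with a completion to a basis. -/
theorem exists_unimodular_small_value (a b c : ℤ) (ha : 0 < a) (hD : 0 < a * c - b ^ 2) :
    ∃ p q r s : ℤ, p * s - q * r = 1 ∧ 0 < a * p ^ 2 + 2 * b * p * r + c * r ^ 2 ∧
      3 * (a * p ^ 2 + 2 * b * p * r + c * r ^ 2) ^ 2 ≤ 4 * (a * c - b ^ 2) := by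
  induction hk : a.toNat using Nat.strong_induction_on generalizing a b c with
  | _ k ih =>
    obtain ⟨t, ht1, ht2⟩ : ∃ t : ℤ, -a ≤ 2 * (b - a * t) ∧ 2 * (b - a * t) ≤ a := by
      have h1 := Int.emod_add_mul_ediv (2 * b + a) (2 * a)
      have h2 := Int.emod_nonneg (2 * b + a) (by omega : 2 * a ≠ 0)
      have h3 := Int.emod_lt_of_pos (2 * b + a) (by omega : 0 < 2 * a)
      exact ⟨(2 * b + a) / (2 * a), by linarith, by linarith⟩
    have hsq : 4 * (b - a * t) ^ 2 ≤ a ^ 2 := by nlinarith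
    have hdet : a * (a * t ^ 2 - 2 * b * t + c) - (b - a * t) ^ 2 = a * c - b ^ 2 := by ring
    rcases le_or_gt a (a * t ^ 2 - 2 * b * t + c) with h | h
    · refine ⟨1, 0, 0, 1, by norm_num, by linarith, ?_⟩
      nlinarith
    · have hc : 0 < a * t ^ 2 - 2 * b * t + c := by
        by_contra hc
        nlinarith [sq_nonneg (b - a * t)]
      obtain ⟨p, q, r, s, h1, h2, h3⟩ := ih _ (by omega) (a * t ^ 2 - 2 * b * t + c)
        (-(b - a * t)) a hc (by nlinarith) rfl
      refine ⟨-t * p - r, -t * q - s, p, q, by linarith, ?_, ?_⟩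
      · refine h2.trans_eq ?_
        ring
      · convert h3 using 1 <;> ring

theorem binary_det_one_sum_two_squares (a b c : ℤ) (ha : 0 < a) (hD : a * c - b ^ 2 = 1)
    (y z : ℤ) : ∃ u v : ℤ, a * y ^ 2 + 2 * b * y * z + c * z ^ 2 = u ^ 2 + v ^ 2 := by
  obtain ⟨p, q, r, s, h1, h2, h3⟩ := exists_unimodular_small_value a b c ha (by omega)
  obtain ⟨α, δ, rfl, rfl⟩ : ∃ α δ : ℤ, y = p * α + q * δ ∧ z = r * α + s * δ :=
    ⟨s * y - q * z, p * z - r * y, by linear_combination (-y) * h1, by linear_combination (-z) * h1⟩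
  have hg : a * p ^ 2 + 2 * b * p * r + c * r ^ 2 = 1 := by
    rw [hD] at h3
    nlinarith
  have hγ : (a * p ^ 2 + 2 * b * p * r + c * r ^ 2) * (a * q ^ 2 + 2 * b * q * s + c * s ^ 2)
      - (a * p * q + b * (p * s + q * r) + c * r * s) ^ 2 = 1 := by
    have : (a * c - b ^ 2) * (p * s - q * r) ^ 2 = 1 := by rw [hD, h1]; norm_num
    rw [← this]
    ring
  rw [hg] at hγ
  refine ⟨α + (a * p * q + b * (p * s + q * r) + c * r * s) * δ, δ, ?_⟩
  linear_combination α ^ 2 * hg + δ ^ 2 * hγ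

theorem ternary_det_one_sum_three_squares (a b c d e f : ℤ) (ha : 0 < a) (hab : 0 < a * b - f ^ 2)
    (hD : a * b * c + 2 * d * e * f - a * d ^ 2 - b * e ^ 2 - c * f ^ 2 = 1) (x y z : ℤ) :
    ∃ u v w : ℤ, a * x ^ 2 + b * y ^ 2 + c * z ^ 2 + 2 * d * y * z + 2 * e * x * z + 2 * f * x * y
      = u ^ 2 + v ^ 2 + w ^ 2 := by
  induction hk : a.toNat using Nat.strong_induction_on generalizing a b c d e f x y z with
  | _ k ih =>
    rcases eq_or_lt_of_le (show 1 ≤ a from ha) with rfl | ha1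
    · obtain ⟨u, v, h⟩ := binary_det_one_sum_two_squares (b - f ^ 2) (d - e * f) (c - e ^ 2)
        (by linarith) (by linear_combination hD) y z
      exact ⟨x + f * y + e * z, u, v, by linear_combination h⟩
    · have hG : (a * b - f ^ 2) * (a * c - e ^ 2) - (a * d - e * f) ^ 2 = a := by
        linear_combination a * hD
      obtain ⟨p, q, r, s, h1, h2, h3⟩ := exists_unimodular_small_value (a * b - f ^ 2)
        (a * d - e * f) (a * c - e ^ 2) hab (by omega)
      rw [hG] at h3
      set g := (a * b - f ^ 2) * p ^ 2 + 2 * (a * d - e * f) * p * r + (a * c - e ^ 2) * r ^ 2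
        with hg
      obtain ⟨t, ht1, ht2⟩ : ∃ t : ℤ, -a ≤ 2 * (f * p + e * r + a * t) ∧
          2 * (f * p + e * r + a * t) ≤ a := by
        have h1 := Int.emod_add_mul_ediv (2 * (f * p + e * r) + a) (2 * a)
        have h2 := Int.emod_nonneg (2 * (f * p + e * r) + a) (by omega : 2 * a ≠ 0)
        have h3 := Int.emod_lt_of_pos (2 * (f * p + e * r) + a) (by omega : 0 < 2 * a)
        exact ⟨-((2 * (f * p + e * r) + a) / (2 * a)), by linarith, by linarith⟩
      have hsq : 4 * (f * p + e * r + a * t) ^ 2 ≤ a ^ 2 := by nlinarith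
      set f' := f * p + e * r + a * t with hf'
      set b' := a * t ^ 2 + b * p ^ 2 + c * r ^ 2 + 2 * d * p * r + 2 * e * t * r + 2 * f * t * p
        with hb'
      have hval : a * b' = g + f' ^ 2 := by rw [hb', hg, hf']; ring
      have hb0 : 0 < b' := by
        by_contra hc
        nlinarith [sq_nonneg f']
      have hlt : b' < a := by
        by_contra! hc
        have h4 : a * a ≤ a * b' := mul_le_mul_of_nonneg_left hc ha.le
        have h5 : 2 * a ≤ a * a := mul_le_mul_of_nonneg_right (by omega) ha.le
        have h6 : 3 * a ≤ 2 * g := by linarith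
        clear_value g f' b'
        nlinarith
      obtain ⟨α, γ, rfl, rfl⟩ : ∃ α γ : ℤ, y = p * α + q * γ ∧ z = r * α + s * γ :=
        ⟨s * y - q * z, p * z - r * y, by linear_combination (-y) * h1,
          by linear_combination (-z) * h1⟩
      have hdet : (a * b * c + 2 * d * e * f - a * d ^ 2 - b * e ^ 2 - c * f ^ 2)
          * (p * s - q * r) ^ 2 = 1 := by rw [hD, h1]; norm_num
      obtain ⟨u, v, w, h⟩ := ih _ (by omega) b' a (b * q ^ 2 + 2 * d * q * s + c * s ^ 2)
        (f * q + e * s) (t * (f * q + e * s) + b * p * q + d * (p * s + q * r) + c * r * s) f'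
        hb0 (by linarith) (by rw [← hdet, hb', hf']; ring) α (x - t * α) γ rfl
      refine ⟨u, v, w, ?_⟩
      rw [← h, hb', hf']
      ring

theorem sum_three_squares_of_mod_four_eq_two (m : ℕ) (hm : m % 4 = 2) :
    ∃ x y z : ℤ, (m : ℤ) = x ^ 2 + y ^ 2 + z ^ 2 := by
  have hcop : (m - 1).Coprime (4 * m) := by
    refine Nat.Coprime.mul_right ?_ ?_
    · have h2 : (m - 1).Coprime 2 := by
        rw [Nat.coprime_two_right, Nat.odd_iff]
        omega
      exact h2.mul_right h2
    · have := Nat.coprime_self_add_right (m := m - 1) (n := 1)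
      rw [show m - 1 + 1 = m by omega] at this
      simpa using this
  obtain ⟨p, hpm, hp, hmod⟩ := Nat.forall_exists_prime_gt_and_modEq m (by omega) hcop
  have hdvd : 4 * m ∣ p - (m - 1) := (Nat.modEq_iff_dvd' (by omega)).mp hmod.symm
  obtain ⟨j, hj⟩ := hdvd
  have hpj : p + 1 = (4 * j + 1) * m := by
    have : (4 * j + 1) * m = 4 * m * j + m := by ring
    omega
  have hp4 : p % 4 = 1 := by
    have h : p = 4 * (m * j) + (m - 1) := by
      have : 4 * m * j = 4 * (m * j) := by ring
      omega
    omega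
  have hbodd : Odd (4 * j + 1) := ⟨2 * j, by ring⟩
  have hpodd : Odd p := Nat.odd_iff.mpr (by omega)
  have := Fact.mk hp
  have hJ : jacobiSym (-((4 * j + 1 : ℕ) : ℤ)) p = 1 := by
    rw [jacobiSym.neg _ hpodd, ZMod.χ₄_nat_one_mod_four hp4, one_mul,
      ← jacobiSym.quadratic_reciprocity_one_mod_four hp4 hbodd,
      jacobiSym.mod_left' (a₂ := -1), jacobiSym.at_neg_one hbodd,
      ZMod.χ₄_nat_one_mod_four (by omega)]
    refine Int.ModEq.symm ((Int.modEq_iff_dvd).mpr ⟨m, ?_⟩)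
    have : ((p + 1 : ℕ) : ℤ) = ((4 * j + 1) * m : ℕ) := by rw [hpj]
    push_cast at this ⊢
    linarith
  obtain ⟨r, hr⟩ := ZMod.isSquare_of_jacobiSym_eq_one hJ
  obtain ⟨f, rfl⟩ := ZMod.intCast_surjective r
  have hd : (p : ℤ) ∣ f ^ 2 + (4 * j + 1) := by
    rw [← ZMod.intCast_zmod_eq_zero_iff_dvd]
    push_cast at hr ⊢
    linear_combination -hr
  obtain ⟨a, ha⟩ := hd
  have hp0 : (0 : ℤ) < p := by exact_mod_cast hp.pos
  have ha0 : 0 < a := by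
    by_contra hc
    nlinarith [sq_nonneg f]
  have hpj' : (p : ℤ) + 1 = (4 * j + 1) * m := by exact_mod_cast hpj
  obtain ⟨u, v, w, h⟩ := ternary_det_one_sum_three_squares a p m 0 1 f ha0 (by nlinarith)
    (by linear_combination (-m : ℤ) * ha - hpj') 0 0 1
  exact ⟨u, v, w, by linear_combination h⟩

theorem exists_sq_add_two_sq_add_four_sq (N : ℕ) (hN : N % 4 = 1) :
    ∃ p q f : ℤ, (N : ℤ) = p ^ 2 + 2 * q ^ 2 + 4 * f ^ 2 := by
  have key : ∀ x y z : ℤ, 2 * (N : ℤ) = x ^ 2 + y ^ 2 + z ^ 2 → z % 2 = 0 →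
      ∃ p q f : ℤ, (N : ℤ) = p ^ 2 + 2 * q ^ 2 + 4 * f ^ 2 := by
    intro x y z h hz
    obtain ⟨j, rfl⟩ : ∃ j, z = 2 * j := ⟨z / 2, by omega⟩
    have hxy : (x + y) % 2 = 0 := by
      have h0 : (x ^ 2 + y ^ 2) % 2 = 0 := by
        have : x ^ 2 + y ^ 2 = 2 * (N - 2 * j ^ 2) := by linear_combination -h
        omega
      rcases Int.emod_two_eq_zero_or_one x with hx | hx <;>
        rcases Int.emod_two_eq_zero_or_one y with hy | hy <;>
        simp [pow_two, Int.add_emod, Int.mul_emod, hx, hy] at h0 ⊢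
    obtain ⟨g, rfl⟩ : ∃ g, x = 2 * g - y := ⟨(x + y) / 2, by omega⟩
    have hN' : (N : ℤ) = g ^ 2 + (g - y) ^ 2 + 2 * j ^ 2 := by linarith
    rcases Int.emod_two_eq_zero_or_one g with hg | hg
    · obtain ⟨i, rfl⟩ : ∃ i, g = 2 * i := ⟨g / 2, by omega⟩
      exact ⟨2 * i - y, j, i, by linear_combination hN'⟩
    · have hy : (g - y) % 2 = 0 := by
        by_contra hy
        obtain ⟨i, hi⟩ : ∃ i, g - y = 2 * i + 1 := ⟨(g - y) / 2, by omega⟩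
        obtain ⟨l, rfl⟩ : ∃ l, g = 2 * l + 1 := ⟨g / 2, by omega⟩
        rw [hi] at hN'
        have : (N : ℤ) = 2 * (2 * l ^ 2 + 2 * l + 2 * i ^ 2 + 2 * i + 1 + j ^ 2) := by
          linear_combination hN'
        omega
      obtain ⟨i, hi⟩ : ∃ i, g - y = 2 * i := ⟨(g - y) / 2, by omega⟩
      rw [hi] at hN'
      exact ⟨g, j, i, by linear_combination hN'⟩
  obtain ⟨x, y, z, h⟩ := sum_three_squares_of_mod_four_eq_two (2 * N) (by omega)
  push_cast at h
  rcases Int.emod_two_eq_zero_or_one z with hz | hz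
  · exact key x y z h hz
  rcases Int.emod_two_eq_zero_or_one y with hy | hy
  · exact key x z y (by linarith) hy
  rcases Int.emod_two_eq_zero_or_one x with hx | hx
  · exact key y z x (by linarith) hx
  · exfalso
    have h0 : (x ^ 2 + y ^ 2 + z ^ 2) % 2 = 0 := by omega
    simp [pow_two, Int.add_emod, Int.mul_emod, hx, hy, hz] at h0

/-- Every nonzero value of `q ^ 2 + 2 * f ^ 2` is taken at a pair that is primitive at `3`. -/
theorem exists_primitive_at_three (q f : ℤ) (h : 0 < q ^ 2 + 2 * f ^ 2) :
    ∃ q' f' : ℤ, q' ^ 2 + 2 * f' ^ 2 = q ^ 2 + 2 * f ^ 2 ∧ ¬ (3 ∣ q' ∧ 3 ∣ f') := by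
  induction hk : (q ^ 2 + 2 * f ^ 2).toNat using Nat.strong_induction_on generalizing q f with
  | _ k ih =>
    by_cases hd : 3 ∣ q ∧ 3 ∣ f
    · obtain ⟨⟨q, rfl⟩, ⟨f, rfl⟩⟩ := hd
      have h9 : (3 * q) ^ 2 + 2 * (3 * f) ^ 2 = 9 * (q ^ 2 + 2 * f ^ 2) := by ring
      rw [h9] at h hk
      obtain ⟨q', f', h1, h2⟩ := ih _ (by omega) q f (by omega) rfl
      by_cases h3 : 3 ∣ 2 * q' + f'
      · exact ⟨q' + 4 * f', 2 * q' - f', by linear_combination 9 * h1, by omega⟩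
      · exact ⟨q' - 4 * f', 2 * q' + f', by linear_combination 9 * h1, by omega⟩
    · exact ⟨q, f, rfl, hd⟩

theorem sq_emod_three (x : ℤ) : x ^ 2 % 3 = 0 ∧ x % 3 = 0 ∨ x ^ 2 % 3 = 1 ∧ x % 3 ≠ 0 := by
  have : x % 3 = 0 ∨ x % 3 = 1 ∨ x % 3 = 2 := by omega
  rcases this with h | h | h <;> simp [pow_two, Int.mul_emod, h]

theorem exists_four_sq_add_six_sq_add_three_sq (N : ℕ) (hN : N % 12 = 1) (hsq : ¬ IsSquare N) :
    ∃ f K L : ℤ, (N : ℤ) = 4 * f ^ 2 + 6 * K ^ 2 + 3 * L ^ 2 := by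
  obtain ⟨p, q₀, f₀, h₀⟩ := exists_sq_add_two_sq_add_four_sq N (by omega)
  have hpos : 0 < q₀ ^ 2 + 2 * f₀ ^ 2 := by
    by_contra hc
    apply hsq
    have h1 : q₀ ^ 2 + 2 * f₀ ^ 2 = 0 := le_antisymm (not_lt.mp hc) (by positivity)
    refine ⟨p.natAbs, ?_⟩
    zify
    rw [abs_mul_abs_self]
    linear_combination h₀ + 2 * h1
  obtain ⟨q, f, h1, h2⟩ := exists_primitive_at_three q₀ f₀ hpos
  have h : (N : ℤ) = p ^ 2 + 2 * q ^ 2 + 4 * f ^ 2 := by linear_combination h₀ - 2 * h1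
  have h3 : p % 3 = q % 3 ∨ p % 3 = (-q) % 3 := by
    have hp := sq_emod_three p
    have hq := sq_emod_three q
    have hf := sq_emod_three f
    omega
  rcases h3 with h3 | h3
  · obtain ⟨K, rfl⟩ : ∃ K, p = q - 3 * K := ⟨(q - p) / 3, by omega⟩
    exact ⟨f, K, q - K, by linear_combination h⟩
  · obtain ⟨K, rfl⟩ : ∃ K, p = -q - 3 * K := ⟨(-q - p) / 3, by omega⟩
    exact ⟨f, K, q + K, by linear_combination h⟩

theorem exists_hexagonal_pair (s k : ℤ) (hk : 0 ≤ k) (hks : k ≤ s) :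
    ∃ a c : ℕ, s ^ 2 + k ^ 2 + k = a * (2 * a - 1) + c * (2 * c + 1) := by
  rcases Int.emod_two_eq_zero_or_one (s - k) with h | h
  · obtain ⟨a, ha⟩ : ∃ a : ℕ, s - k = 2 * a := ⟨((s - k) / 2).toNat, by omega⟩
    refine ⟨a, a + k.toNat, ?_⟩
    obtain rfl : s = 2 * a + k := by linarith
    push_cast
    rw [Int.toNat_of_nonneg hk]
    ring
  · obtain ⟨c, hc⟩ : ∃ c : ℕ, s - k = 2 * c + 1 := ⟨((s - k) / 2).toNat, by omega⟩
    refine ⟨c + k.toNat + 1, c, ?_⟩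
    obtain rfl : s = 2 * c + 1 + k := by linarith
    push_cast
    rw [Int.toNat_of_nonneg hk]
    ring

theorem int_cast_mul_two_mul_sub_one (a : ℕ) : ((a * (2 * a - 1) : ℕ) : ℤ) = a * (2 * a - 1) := by
  cases a with
  | zero => simp
  | succ a => rw [show 2 * (a + 1) - 1 = 2 * a + 1 by omega]; push_cast; ring

theorem representable_of_parameter (n B N : ℕ) (hB : B % 3 ≠ 0) (hN : N + 8 * B ^ 2 = 12 * n + 9)
    (hsq : ¬ IsSquare N) (hle : 5 * N ≤ 2 * (2 * B + 3) ^ 2) :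
    ∃ a b c d : ℕ,
      n = 2 * (a * (2 * a - 1)) + b * (2 * b - 1) + 2 * (c * (2 * c + 1)) + d * (2 * d + 1) := by
  have hB3 : B ^ 2 % 3 = 1 := by
    have : B % 3 = 1 ∨ B % 3 = 2 := by omega
    rcases this with h | h <;> simp [pow_two, Nat.mul_mod, h]
  obtain ⟨f₀, K₀, L₀, h₀⟩ := exists_four_sq_add_six_sq_add_three_sq N (by omega) hsq
  obtain ⟨f, hf, hf3⟩ : ∃ f : ℤ, f ^ 2 = f₀ ^ 2 ∧ (B + f) % 3 = 0 := by
    have h1 := sq_emod_three f₀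
    have h2 : (N : ℤ) % 3 = 1 := by omega
    have h3 : (B : ℤ) % 3 = 1 ∨ (B : ℤ) % 3 = 2 := by omega
    have h4 : f₀ % 3 = 1 ∨ f₀ % 3 = 2 := by omega
    by_cases h : (B + f₀) % 3 = 0
    · exact ⟨f₀, rfl, h⟩
    · exact ⟨-f₀, by ring, by omega⟩
  have h : (N : ℤ) = 4 * f ^ 2 + 6 * |K₀| ^ 2 + 3 * |L₀| ^ 2 := by
    rw [sq_abs, sq_abs, hf, h₀]
  have hK0 := abs_nonneg K₀
  have hL0 := abs_nonneg L₀
  generalize |K₀| = K at h hK0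
  generalize |L₀| = L at h hL0
  have hZ : (N : ℤ) + 8 * B ^ 2 = 12 * n + 9 := by exact_mod_cast hN
  have hleZ : 5 * (N : ℤ) ≤ 2 * (2 * B + 3) ^ 2 := by exact_mod_cast hle
  have hpar : ∀ x : ℤ, x ^ 2 % 4 = 0 ∧ x % 2 = 0 ∨ x ^ 2 % 4 = 1 ∧ x % 2 = 1 := by
    intro x
    rcases Int.emod_two_eq_zero_or_one x with hx | hx
    · obtain ⟨i, rfl⟩ : ∃ i, x = 2 * i := ⟨x / 2, by omega⟩
      have : (2 * i) ^ 2 = 4 * i ^ 2 := by ring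
      omega
    · obtain ⟨i, rfl⟩ : ∃ i, x = 2 * i + 1 := ⟨x / 2, by omega⟩
      have : (2 * i + 1) ^ 2 = 4 * (i ^ 2 + i) + 1 := by ring
      omega
  have hKL : K % 2 = 1 ∧ L % 2 = 1 := by
    have h1 := hpar K
    have h2 := hpar L
    omega
  have hB1 : (1 : ℤ) ≤ B := by omega
  have hKle : 3 * K ≤ 2 * B + 2 * f + 3 := by
    by_contra! hc
    have h1 : (2 * (B : ℤ) + 3) ^ 2 < (3 * K - 2 * f) ^ 2 :=
      pow_lt_pow_left₀ (by linarith) (by linarith) (by norm_num)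
    nlinarith [sq_nonneg (2 * K + 2 * f), sq_nonneg (K + 2 * f), sq_nonneg L]
  have hLle : 3 * L ≤ 4 * B - 2 * f + 3 := by
    by_contra! hc
    have h1 : (4 * (B : ℤ) + 3) ^ 2 < (3 * L + 2 * f) ^ 2 :=
      pow_lt_pow_left₀ (by linarith) (by linarith) (by norm_num)
    nlinarith [sq_nonneg (L - 2 * f), sq_nonneg K]
  obtain ⟨s, hs⟩ : ∃ s, (B : ℤ) + f = 3 * s := ⟨(B + f) / 3, by omega⟩
  obtain rfl : f = 3 * s - B := by linarith
  obtain ⟨k, rfl⟩ : ∃ k, K = 2 * k + 1 := ⟨K / 2, by omega⟩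
  obtain ⟨l, rfl⟩ : ∃ l, L = 2 * l + 1 := ⟨L / 2, by omega⟩
  obtain ⟨a, c, hac⟩ := exists_hexagonal_pair s k (by omega) (by omega)
  obtain ⟨b, d, hbd⟩ := exists_hexagonal_pair (B - s) l (by omega) (by omega)
  refine ⟨a, b, c, d, ?_⟩
  zify
  have ha := int_cast_mul_two_mul_sub_one a
  have hb := int_cast_mul_two_mul_sub_one b
  push_cast at ha hb
  rw [ha, hb]
  linarith

theorem representable_of_large (n : ℕ) (hn : 10000 ≤ n) :
    ∃ a b c d : ℕ,
      n = 2 * (a * (2 * a - 1)) + b * (2 * b - 1) + 2 * (c * (2 * c + 1)) + d * (2 * d + 1) := by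
  obtain ⟨R, hR1, hR2⟩ : ∃ R : ℕ, 8 * R ^ 2 ≤ 12 * n ∧ 12 * n < 8 * (R + 1) ^ 2 := by
    have h1 := Nat.sqrt_le' (12 * n / 8)
    have h2 : 12 * n / 8 < (Nat.sqrt (12 * n / 8) + 1) ^ 2 := Nat.lt_succ_sqrt' _
    exact ⟨Nat.sqrt (12 * n / 8), by omega, by omega⟩
  have hR : 121 ≤ R := by
    by_contra! hc
    have : (R + 1) ^ 2 ≤ 121 ^ 2 := Nat.pow_le_pow_left (by omega) 2
    omega
  have hres : ∀ c < 5, ∀ r < 15, ∃ i < 10, (r + 15 - i) % 3 ≠ 0 ∧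
      ((2 * c + 4 + 2 * (r + 15 - i) ^ 2) % 5 = 2 ∨
        (2 * c + 4 + 2 * (r + 15 - i) ^ 2) % 5 = 3) := by decide
  obtain ⟨i, hi, h3, h5⟩ := hres (n % 5) (Nat.mod_lt _ (by norm_num)) (R % 15)
    (Nat.mod_lt _ (by norm_num))
  obtain ⟨B, rfl⟩ : ∃ B, R = B + i := ⟨R - i, by omega⟩
  have hB5 : B % 5 = ((B + i) % 15 + 15 - i) % 5 := by omega
  have hBsq : B ^ 2 % 5 = ((B + i) % 15 + 15 - i) ^ 2 % 5 := by
    rw [Nat.pow_mod, hB5, ← Nat.pow_mod]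
  have hle : 8 * B ^ 2 ≤ 12 * n := by nlinarith
  refine representable_of_parameter n B (12 * n + 9 - 8 * B ^ 2) (by omega) (by omega) ?_ ?_
  · rintro ⟨m, hm⟩
    have h : (12 * n + 9 - 8 * B ^ 2) % 5 = 2 ∨ (12 * n + 9 - 8 * B ^ 2) % 5 = 3 := by omega
    rw [hm, Nat.mul_mod] at h
    have hm5 : m % 5 < 5 := Nat.mod_lt _ (by norm_num)
    interval_cases m % 5 <;> omega
  · have hi9 : i ≤ 9 := by omega
    have h1 : (B + i + 1) ^ 2 ≤ (B + 10) ^ 2 := Nat.pow_le_pow_left (by omega) 2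
    have h2 : 112 ≤ B := by omega
    have h4 : 5 * (12 * n + 9) ≤ 2 * (2 * B + 3) ^ 2 + 40 * B ^ 2 := by nlinarith
    omega

/-- Bit `i` of the result is set when `i - t j` is a bit of `M` for some `j` below the bound. -/
def shiftUnion (t : ℕ → ℕ) (M : ℕ) : ℕ → ℕ
  | 0 => 0
  | k + 1 => shiftUnion t M k ||| M <<< t k

theorem exists_of_testBit_shiftUnion (t : ℕ → ℕ) (M k i : ℕ)
    (h : (shiftUnion t M k).testBit i = true) :
    ∃ j x, i = x + t j ∧ M.testBit x = true := by
  induction k with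
  | zero => simp [shiftUnion] at h
  | succ k ih =>
    rw [shiftUnion, Nat.testBit_or, Bool.or_eq_true] at h
    rcases h with h | h
    · exact ih h
    · rw [Nat.testBit_shiftLeft, Bool.and_eq_true, decide_eq_true_eq] at h
      exact ⟨k, i - t k, by omega, h.2⟩

theorem testBit_of_mod_two_pow_eq {M k n : ℕ} (h : M % 2 ^ k = 2 ^ k - 1) (hn : n < k) :
    M.testBit n = true := by
  have h' := Nat.testBit_two_pow_sub_one k n
  rwa [← h, Nat.testBit_mod_two_pow, decide_eq_true hn, Bool.true_and] at h'

set_option exponentiation.threshold 20000 in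
theorem representable_of_small (n : ℕ) (hn : n < 10000) :
    ∃ a b c d : ℕ,
      n = 2 * (a * (2 * a - 1)) + b * (2 * b - 1) + 2 * (c * (2 * c + 1)) + d * (2 * d + 1) := by
  have hmask : shiftUnion (fun a ↦ 2 * (a * (2 * a - 1))) (shiftUnion (fun b ↦ b * (2 * b - 1))
      (shiftUnion (fun c ↦ 2 * (c * (2 * c + 1))) (shiftUnion (fun d ↦ d * (2 * d + 1)) 1 75) 55)
      75) 55 % 2 ^ 10000 = 2 ^ 10000 - 1 := by decide +kernel
  obtain ⟨a, w, rfl, hw⟩ := exists_of_testBit_shiftUnion _ _ _ _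
    (testBit_of_mod_two_pow_eq hmask hn)
  obtain ⟨b, x, rfl, hx⟩ := exists_of_testBit_shiftUnion _ _ _ _ hw
  obtain ⟨c, y, rfl, hy⟩ := exists_of_testBit_shiftUnion _ _ _ _ hx
  obtain ⟨d, z, rfl, hz⟩ := exists_of_testBit_shiftUnion _ _ _ _ hy
  obtain rfl : z = 0 := Nat.testBit_one_eq_true_iff_self_eq_zero.mp hz
  exact ⟨a, b, c, d, by ring⟩

theorem stmt_1 (n : ℕ) :
    ∃ a b c d : ℕ,
      n = 2 * (a * (2 * a - 1)) + b * (2 * b - 1) + 2 * (c * (2 * c + 1)) + d * (2 * d + 1) := by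
  rcases lt_or_ge n 10000 with hn | hn
  · exact representable_of_small n hn
  · exact representable_of_large n hn
end

section
/- Every non-negative integer m can be written as m = x² + T_y + T_z for some non-negative integers x, y, z. -/
/-- The `k`-th triangular number. -/
def T (k : ℕ) : ℕ := k * (k + 1) / 2

lemma exists_four_mul_sq_sub_mul_le_sq (t x : ℤ) (ht : 0 < t) :
    ∃ k : ℤ, 4 * (x - t * k) ^ 2 ≤ t ^ 2 := by
  refine ⟨(2 * x + t) / (2 * t), ?_⟩
  have h₁ := Int.mul_ediv_add_emod (2 * x + t) (2 * t)
  have h₂ := Int.emod_nonneg (2 * x + t) (b := 2 * t) (by omega)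
  have h₃ := Int.emod_lt_of_pos (2 * x + t) (b := 2 * t) (by omega)
  generalize (2 * x + t) / (2 * t) = k at *
  have h₄ : -t ≤ 2 * (x - t * k) := by linarith
  have h₅ : 2 * (x - t * k) ≤ t := by linarith
  nlinarith

/-- **Davenport–Cassels**: an integer that is a sum of three rational squares is a sum of three
integer squares. -/
lemma exists_sum_three_sq_of_mul_sq_eq (n : ℤ) (t : ℕ) (ht : 0 < t) (x y z : ℤ)
    (h : n * t ^ 2 = x ^ 2 + y ^ 2 + z ^ 2) :
    ∃ a b c : ℤ, n = a ^ 2 + b ^ 2 + c ^ 2 := by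
  induction t using Nat.strong_induction_on generalizing x y z with
  | _ t ih =>
  have htz : (0 : ℤ) < t := by exact_mod_cast ht
  obtain ⟨a, ha⟩ := exists_four_mul_sq_sub_mul_le_sq t x htz
  obtain ⟨b, hb⟩ := exists_four_mul_sq_sub_mul_le_sq t y htz
  obtain ⟨c, hc⟩ := exists_four_mul_sq_sub_mul_le_sq t z htz
  obtain ⟨k, hk⟩ : ∃ k, k = a ^ 2 + b ^ 2 + c ^ 2 - n := ⟨_, rfl⟩
  obtain ⟨B, hB⟩ : ∃ B, B = 2 * (n * t - (x * a + y * b + z * c)) := ⟨_, rfl⟩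
  have hN : (x - t * a) ^ 2 + (y - t * b) ^ 2 + (z - t * c) ^ 2 = t * (k * t + B) := by
    rw [hk, hB]; linear_combination -h
  have hs_nonneg : 0 ≤ k * t + B := by
    have : 0 ≤ t * (k * t + B) := by rw [← hN]; positivity
    exact nonneg_of_mul_nonneg_right this htz
  have hs_lt : k * t + B < t := by nlinarith
  obtain hs | hs := hs_nonneg.eq_or_lt
  · rw [← hs, mul_zero] at hN
    have hx : x = t * a := by
      nlinarith [sq_nonneg (x - t * a), sq_nonneg (y - t * b), sq_nonneg (z - t * c)]
    have hy : y = t * b := by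
      nlinarith [sq_nonneg (x - t * a), sq_nonneg (y - t * b), sq_nonneg (z - t * c)]
    have hz : z = t * c := by
      nlinarith [sq_nonneg (x - t * a), sq_nonneg (y - t * b), sq_nonneg (z - t * c)]
    refine ⟨a, b, c, mul_right_cancel₀ (pow_ne_zero 2 htz.ne') ?_⟩
    rw [h, hx, hy, hz]; ring
  · have hcast : (((k * t + B).toNat : ℕ) : ℤ) = k * t + B := Int.toNat_of_nonneg hs_nonneg
    refine ih (k * t + B).toNat (by omega) (by omega)
      (k * x + B * a) (k * y + B * b) (k * z + B * c) ?_
    rw [hcast]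
    linear_combination k ^ 2 * h + B ^ 2 * hk - k * B * hB

lemma exists_small_solution_congruences (n q : ℕ) [NeZero n] [NeZero q] (r : ℤ) :
    ∃ z w t : ℤ, (z ≠ 0 ∨ w ≠ 0 ∨ t ≠ 0) ∧ z ^ 2 ≤ n * q ∧ w ^ 2 ≤ n ∧ t ^ 2 ≤ q ∧
      (n : ℤ) ∣ z - w ∧ (q : ℤ) ∣ z - r * t := by
  let s := Finset.range ((n * q).sqrt + 1) ×ˢ
    Finset.range (n.sqrt + 1) ×ˢ Finset.range (q.sqrt + 1)
  let f : ℕ × ℕ × ℕ → ZMod n × ZMod q := fun v ↦ (v.1 - v.2.1, v.1 - r * v.2.2)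
  have hcard : (Finset.univ : Finset (ZMod n × ZMod q)).card < s.card := by
    simp only [s, Finset.card_univ, Fintype.card_prod, ZMod.card, Finset.card_product,
      Finset.card_range]
    have h₁ := Nat.lt_succ_sqrt (n * q)
    have h₂ := Nat.lt_succ_sqrt n
    have h₃ := Nat.lt_succ_sqrt q
    have h₄ := Nat.mul_lt_mul'' h₁ (Nat.mul_lt_mul'' h₂ h₃)
    simp only [Nat.succ_eq_add_one] at h₄
    by_contra! hle
    have := Nat.mul_le_mul hle hle
    nlinarith
  obtain ⟨⟨z₁, w₁, t₁⟩, h₁, ⟨z₂, w₂, t₂⟩, h₂, hne, heq⟩ :=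
    Finset.exists_ne_map_eq_of_card_lt_of_maps_to hcard (f := f) (fun _ _ ↦ Finset.mem_univ _)
  have sq_sub_le {a b N : ℕ} (ha : a < N.sqrt + 1) (hb : b < N.sqrt + 1) :
      ((a : ℤ) - b) ^ 2 ≤ N := by
    have hN : (N.sqrt : ℤ) ^ 2 ≤ N := by exact_mod_cast Nat.sqrt_le' N
    refine (sq_le_sq' ?_ ?_).trans hN <;> omega
  simp only [s, Finset.mem_product, Finset.mem_range] at h₁ h₂
  simp only [f, Prod.mk.injEq] at heq
  refine ⟨z₁ - z₂, w₁ - w₂, t₁ - t₂, ?_, ?_, sq_sub_le h₁.2.1 h₂.2.1, sq_sub_le h₁.2.2 h₂.2.2,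
    ?_, ?_⟩
  · by_contra! h
    apply hne
    simp only [Prod.mk.injEq]
    omega
  · exact_mod_cast sq_sub_le h₁.1 h₂.1
  · rw [← ZMod.intCast_zmod_eq_zero_iff_dvd]
    push_cast
    linear_combination heq.1
  · rw [← ZMod.intCast_zmod_eq_zero_iff_dvd]
    push_cast
    linear_combination heq.2

lemma exists_mul_sq_eq_sq_add_prime_mul_sq (n q : ℕ) (hq : q.Prime) (hn : 0 < n)
    (hnq : n.Coprime q) (hdvd : n ∣ q + 1) (hsq : IsSquare ((n : ℤ) : ZMod q)) :
    ∃ t : ℕ, 0 < t ∧ ∃ z w : ℤ, (n : ℤ) * t ^ 2 = z ^ 2 + q * w ^ 2 := by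
  have : NeZero n := ⟨hn.ne'⟩
  have : NeZero q := ⟨hq.ne_zero⟩
  have hqz : Prime (q : ℤ) := Nat.prime_iff_prime_int.mp hq
  have hn0 : (0 : ℤ) < n := by exact_mod_cast hn
  have hq0 : (0 : ℤ) < q := by exact_mod_cast hq.pos
  have hqn : ¬ (q : ℤ) ∣ n := by
    rw [Int.natCast_dvd_natCast]
    exact (Nat.Prime.coprime_iff_not_dvd hq).mp hnq.symm
  obtain ⟨r, hr⟩ : ∃ r : ℤ, (q : ℤ) ∣ r ^ 2 - n := by
    obtain ⟨r, hr⟩ := hsq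
    obtain ⟨r, rfl⟩ := ZMod.intCast_surjective r
    refine ⟨r, ?_⟩
    rw [← ZMod.intCast_zmod_eq_zero_iff_dvd]
    push_cast at hr ⊢
    linear_combination -hr
  obtain ⟨z, w, t, hne, hz, hw, ht, ⟨u, hu⟩, ⟨v, hv⟩⟩ := exists_small_solution_congruences n q r
  have h_dvd_n : (n : ℤ) ∣ z ^ 2 + q * w ^ 2 - n * t ^ 2 := by
    obtain ⟨e, he⟩ : (n : ℤ) ∣ q + 1 := by exact_mod_cast hdvd
    exact ⟨u * (z + w) + e * w ^ 2 - t ^ 2, by linear_combination (z + w) * hu + w ^ 2 * he⟩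
  have h_dvd_q : (q : ℤ) ∣ z ^ 2 + q * w ^ 2 - n * t ^ 2 := by
    obtain ⟨e, he⟩ := hr
    exact ⟨v * (z + r * t) + w ^ 2 + e * t ^ 2, by
      linear_combination (z + r * t) * hv + t ^ 2 * he⟩
  obtain ⟨k, hk⟩ := IsCoprime.mul_dvd (Nat.isCoprime_iff_coprime.mpr hnq) h_dvd_n h_dvd_q
  have hnq0 : (0 : ℤ) < n * q := by positivity
  have ht' : t ^ 2 < q := by
    refine ht.lt_of_ne fun h ↦ hqz.not_isSquare ⟨t, by rw [← h, sq]⟩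
  have hz' : z ^ 2 < n * q := by
    refine hz.lt_of_ne fun h ↦ hqn ?_
    obtain ⟨e, rfl⟩ : (q : ℤ) ∣ z := hqz.dvd_of_dvd_pow ⟨n, h.trans (mul_comm _ _)⟩
    exact ⟨e ^ 2, mul_right_cancel₀ hq0.ne' (by linear_combination -h)⟩
  have hk_gt : -1 < k := by
    have : (n : ℤ) * t ^ 2 < n * q := by gcongr
    have : n * q * (-1) < n * q * k := by nlinarith [sq_nonneg z, sq_nonneg w]
    exact lt_of_mul_lt_mul_left this hnq0.le
  have hk_lt : k < 2 := by
    have : (q : ℤ) * w ^ 2 ≤ q * n := by gcongr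
    have : n * q * k < n * q * 2 := by nlinarith [sq_nonneg t]
    exact lt_of_mul_lt_mul_left this hnq0.le
  obtain rfl | rfl : k = 0 ∨ k = 1 := by omega
  · refine ⟨t.natAbs, ?_, z, w, ?_⟩
    · rw [Int.natAbs_pos]
      rintro rfl
      have hz0 : z = 0 := by
        have := mul_nonneg hq0.le (sq_nonneg w)
        have : z ^ 2 = 0 := by nlinarith [sq_nonneg z]
        simpa using this
      subst hz0
      have hw0 : w = 0 := by simpa [hq.ne_zero] using hk
      simp [hw0] at hne
    · rw [Int.natCast_natAbs, sq_abs]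
      linear_combination -hk
  · refine ⟨t.natAbs ^ 2 + q, by have := hq.pos; positivity, z * t + q * w, z - w * t, ?_⟩
    push_cast
    rw [sq_abs]
    linear_combination -(t ^ 2 + q) * hk

lemma exists_prime_isSquare_of_mod_four_eq_one (n : ℕ) (hn : n % 4 = 1) :
    ∃ q : ℕ, q.Prime ∧ q % 4 = 1 ∧ n ∣ q + 1 ∧ n.Coprime q ∧ IsSquare ((n : ℤ) : ZMod q) := by
  have hcop : IsCoprime (2 * n - 1 : ℤ) ((4 * n : ℕ) : ℤ) := by
    refine ⟨-(2 * n + 1), n, ?_⟩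
    push_cast
    ring
  obtain ⟨q, -, hq, hmod⟩ := Nat.forall_exists_prime_gt_and_zmodEq 0 (by omega) hcop
  obtain ⟨j, hj⟩ := hmod.symm.dvd
  push_cast at hj
  have hdvd : (n : ℤ) ∣ q + 1 := ⟨2 + 4 * j, by linear_combination hj⟩
  have hq4 : q % 4 = 1 := by
    have : (q : ℤ) = 2 * n - 1 + 4 * (n * j) := by linear_combination hj
    omega
  have hdvd' : n ∣ q + 1 := by exact_mod_cast hdvd
  refine ⟨q, hq, hq4, hdvd', ?_, ?_⟩
  · obtain ⟨e, he⟩ := hdvd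
    exact Nat.isCoprime_iff_coprime.mp ⟨e, -1, by linear_combination -he⟩
  have : Fact q.Prime := ⟨hq⟩
  have hodd : Odd n := Nat.odd_iff.mpr (by omega)
  apply ZMod.isSquare_of_jacobiSym_eq_one
  rw [jacobiSym.quadratic_reciprocity_one_mod_four hn (Nat.odd_iff.mpr (by omega)),
    jacobiSym.mod_left' (a₂ := -1), jacobiSym.at_neg_one hodd, ZMod.χ₄_nat_one_mod_four hn]
  exact Int.emod_eq_emod_iff_emod_sub_eq_zero.mpr
    (Int.emod_eq_zero_of_dvd (by simpa using hdvd))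

/-- The case `n ≡ 1 [MOD 4]` of **Legendre's three-square theorem**. -/
lemma exists_sum_three_sq_of_mod_four_eq_one (n : ℕ) (hn : n % 4 = 1) :
    ∃ a b c : ℤ, (n : ℤ) = a ^ 2 + b ^ 2 + c ^ 2 := by
  obtain ⟨q, hq, hq4, hdvd, hcop, hsq⟩ := exists_prime_isSquare_of_mod_four_eq_one n hn
  have : Fact q.Prime := ⟨hq⟩
  obtain ⟨c, d, hcd⟩ := Nat.Prime.sq_add_sq (p := q) (by omega)
  obtain ⟨t, ht, z, w, h⟩ :=
    exists_mul_sq_eq_sq_add_prime_mul_sq n q hq (by omega) hcop hdvd hsq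
  refine exists_sum_three_sq_of_mul_sq_eq n t ht z (c * w) (d * w) ?_
  rw [h, ← hcd]
  push_cast
  ring

lemma two_mul_T (k : ℕ) : 2 * T k = k * (k + 1) :=
  Nat.mul_div_cancel' (Nat.even_mul_succ_self k).two_dvd

lemma exists_two_mul_T_eq (a : ℤ) : ∃ k : ℕ, 2 * (T k : ℤ) = a * (a + 1) := by
  obtain ⟨k, rfl | rfl⟩ := a.eq_nat_or_neg
  · exact ⟨k, by exact_mod_cast two_mul_T k⟩
  · obtain _ | k := k
    · exact ⟨0, by simp [T]⟩
    · refine ⟨k, ?_⟩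
      have : 2 * (T k : ℤ) = k * (k + 1) := by exact_mod_cast two_mul_T k
      rw [this]
      push_cast
      ring

lemma exists_eq_sq_add_T_add_T (m : ℕ) (a b c : ℤ)
    (h : 4 * (m : ℤ) + 1 = (2 * a) ^ 2 + (2 * b) ^ 2 + (2 * c + 1) ^ 2) :
    ∃ x y z : ℕ, m = x ^ 2 + T y + T z := by
  obtain ⟨y, hy⟩ := exists_two_mul_T_eq (b + c)
  obtain ⟨z, hz⟩ := exists_two_mul_T_eq (c - b)
  refine ⟨a.natAbs, y, z, ?_⟩
  zify
  rw [sq_abs]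
  linarith

theorem stmt_4 (m : ℕ) : ∃ x y z : ℕ, m = x ^ 2 + T y + T z := by
  obtain ⟨a, b, c, h⟩ := exists_sum_three_sq_of_mod_four_eq_one (4 * m + 1) (by omega)
  push_cast at h
  obtain ⟨a, rfl | rfl⟩ := a.even_or_odd' <;> obtain ⟨b, rfl | rfl⟩ := b.even_or_odd' <;>
    obtain ⟨c, rfl | rfl⟩ := c.even_or_odd' <;> ring_nf at h
  · omega
  · exact exists_eq_sq_add_T_add_T m a b c (by linarith)
  · exact exists_eq_sq_add_T_add_T m a c b (by linarith)
  · omega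
  · exact exists_eq_sq_add_T_add_T m b c a (by linarith)
  · omega
  · omega
  · omega
end

section
/- Every non-negative integer m can be written as m = 4·T_x + T_y + T_z for some non-negative integers x, y, z. -/
/-- Every integer can be translated by a multiple of `a > 0` into `[-a/2, a/2]`. -/
lemma exists_abs_two_mul_add_mul_le (f : ℤ) {a : ℤ} (ha : 0 < a) :
    ∃ k : ℤ, -a ≤ 2 * (f + k * a) ∧ 2 * (f + k * a) ≤ a := by
  refine ⟨-((2 * f + a) / (2 * a)), ?_, ?_⟩
  · have := Int.emod_add_mul_ediv (2 * f + a) (2 * a)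
    have := Int.emod_nonneg (2 * f + a) (show 2 * a ≠ 0 by positivity)
    linarith
  · have := Int.emod_add_mul_ediv (2 * f + a) (2 * a)
    have := Int.emod_lt_of_pos (2 * f + a) (show 0 < 2 * a by positivity)
    linarith

/-- Every value of a positive definite integral ternary quadratic form of determinant one is a sum
of three squares. -/
theorem ternary_form_eq_sum_three_squares (a b c d e f : ℤ) (ha : 0 < a) (hB : 0 < a * b - f ^ 2)
    (hdet : a * b * c + 2 * d * e * f - a * d ^ 2 - b * e ^ 2 - c * f ^ 2 = 1) (x y z : ℤ) :
    ∃ u v w : ℤ, a * x ^ 2 + b * y ^ 2 + c * z ^ 2 + 2 * d * y * z + 2 * e * x * z + 2 * f * x * y =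
      u ^ 2 + v ^ 2 + w ^ 2 := by
  by_cases h : 4 * a < 3 * (a * b - f ^ 2) ^ 2
  · obtain ⟨k, hk₁, hk₂⟩ := exists_abs_two_mul_add_mul_le (a * d - e * f) hB
    have key : (a * b - f ^ 2) * (a * (c + 2 * k * d + k ^ 2 * b) - (e + k * f) ^ 2) =
        a + (a * d - e * f + k * (a * b - f ^ 2)) ^ 2 := by
      linear_combination a * hdet
    have hpos : 0 < a * (c + 2 * k * d + k ^ 2 * b) - (e + k * f) ^ 2 := by
      refine pos_of_mul_pos_right (a := a * b - f ^ 2) ?_ hB.le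
      rw [key]
      positivity
    have hlt : a * (c + 2 * k * d + k ^ 2 * b) - (e + k * f) ^ 2 < a * b - f ^ 2 := by
      refine lt_of_mul_lt_mul_left (a := a * b - f ^ 2) ?_ hB.le
      rw [key]
      nlinarith
    obtain ⟨u, v, w, huvw⟩ := ternary_form_eq_sum_three_squares a (c + 2 * k * d + k ^ 2 * b) b
      (d + k * b) f (e + k * f) ha hpos (by linear_combination hdet) x z (y - k * z)
    exact ⟨u, v, w, by rw [← huvw]; ring⟩
  push Not at h
  obtain rfl | ha₂ : a = 1 ∨ 2 ≤ a := by lia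
  · have hB₁ : 1 * b - f ^ 2 = 1 := by nlinarith
    refine ⟨x + f * y + e * z, y + (d - e * f) * z, z, ?_⟩
    obtain rfl : b = 1 + f ^ 2 := by linarith
    linear_combination z ^ 2 * hdet
  · obtain ⟨k, hk₁, hk₂⟩ := exists_abs_two_mul_add_mul_le f ha
    have key : a * (b + 2 * k * f + k ^ 2 * a) = a * b - f ^ 2 + (f + k * a) ^ 2 := by ring
    have hpos : 0 < b + 2 * k * f + k ^ 2 * a := by
      refine pos_of_mul_pos_right (a := a) ?_ ha.le
      rw [key]
      positivity
    have hlt : b + 2 * k * f + k ^ 2 * a < a := by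
      refine lt_of_mul_lt_mul_left (a := a) ?_ ha.le
      rw [key]
      have h₁ : 4 * (f + k * a) ^ 2 ≤ a ^ 2 := by nlinarith
      have h₂ : a * b - f ^ 2 < a := by nlinarith
      nlinarith
    obtain ⟨u, v, w, huvw⟩ := ternary_form_eq_sum_three_squares (b + 2 * k * f + k ^ 2 * a) a c
      e (d + k * e) (f + k * a) hpos (by linarith) (by linear_combination hdet) y (x - k * y) z
    exact ⟨u, v, w, by rw [← huvw]; ring⟩
termination_by (a.toNat, (a * b - f ^ 2).toNat)
decreasing_by
  · exact Prod.Lex.right _ (by lia)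
  · exact Prod.Lex.left _ _ (by lia)

/-- Every natural number congruent to `2` modulo `4` is a sum of three squares. -/
theorem sum_three_squares_of_mod_four_eq_two_s5 {n : ℕ} (hn : n % 4 = 2) :
    ∃ u v w : ℤ, (n : ℤ) = u ^ 2 + v ^ 2 + w ^ 2 := by
  have hcop : (n - 1).Coprime (4 * n) := by
    refine Nat.Coprime.mul_right ?_ ?_
    · exact Nat.Coprime.pow_right 2 (Nat.coprime_two_right.2 (by grind))
    · exact (Nat.coprime_self_sub_left (by lia)).2 (Nat.coprime_one_left n)
  obtain ⟨p, hpn, hp, hmod⟩ :=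
    Nat.forall_exists_prime_gt_and_modEq n (show 4 * n ≠ 0 by lia) hcop
  obtain ⟨v, hv⟩ : ∃ v, p = (n - 1) + 4 * n * v := by
    obtain ⟨v, hv⟩ := (Nat.modEq_iff_dvd' (by lia)).1 hmod.symm
    exact ⟨v, by lia⟩
  have hpd : p + 1 = (4 * v + 1) * n := by
    have : 1 ≤ n := by lia
    zify [this] at hv ⊢
    linear_combination hv
  have hp4 : p % 4 = 1 := by
    rw [hv, mul_assoc]
    generalize n * v = q
    lia
  have := Fact.mk hp
  have hd4 : (4 * v + 1) % 4 = 1 := by lia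
  have hJ : jacobiSym (-(4 * v + 1 : ℕ)) p = 1 := by
    have h₁ : jacobiSym (-1) p = 1 := by
      rw [jacobiSym.at_neg_one (by grind), ZMod.χ₄_nat_one_mod_four hp4]
    have h₂ : jacobiSym (-1) (4 * v + 1) = 1 := by
      rw [jacobiSym.at_neg_one (by grind), ZMod.χ₄_nat_one_mod_four hd4]
    rw [neg_eq_neg_one_mul, jacobiSym.mul_left, h₁, one_mul,
      jacobiSym.quadratic_reciprocity_one_mod_four hd4 (by grind), ← h₂]
    refine jacobiSym.mod_left' (Int.ModEq.symm ?_)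
    refine Int.modEq_iff_dvd.2 ⟨n, ?_⟩
    zify at hpd
    push_cast
    linear_combination hpd
  have hsq : IsSquare ((-(4 * v + 1 : ℕ) : ℤ) : ZMod p) := by
    rw [← jacobiSym.legendreSym.to_jacobiSym] at hJ
    refine (legendreSym.eq_one_iff p fun h0 => ?_).1 hJ
    rw [(legendreSym.eq_zero_iff p _).2 h0] at hJ
    exact zero_ne_one hJ
  obtain ⟨r, hr⟩ := hsq
  obtain ⟨t, rfl⟩ := ZMod.intCast_surjective r
  obtain ⟨a, hat⟩ : (p : ℤ) ∣ t ^ 2 + (4 * v + 1) := by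
    rw [← ZMod.intCast_zmod_eq_zero_iff_dvd]
    push_cast at hr ⊢
    linear_combination -hr
  have hp0 : (0 : ℤ) < p := by exact_mod_cast hp.pos
  have ha : 0 < a := by
    refine pos_of_mul_pos_right (a := (p : ℤ)) ?_ hp0.le
    rw [← hat]
    positivity
  zify at hpd
  obtain ⟨x, y, z, h⟩ := ternary_form_eq_sum_three_squares a p n 0 1 t ha
    (by linarith) (by linear_combination (-(n : ℤ)) * hat - hpd) 0 0 1
  exact ⟨x, y, z, by linear_combination h⟩

/-- If `8 m + 6 = u² + v² + w²` with `u` even and `v` odd, then `m` is represented by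
`4 T_x + T_y + T_z`. -/
lemma exists_triangular_of_sum_three_squares {m u v w : ℕ} (h : 8 * m + 6 = u ^ 2 + v ^ 2 + w ^ 2)
    (hu : Even u) (hv : Odd v) : ∃ x y z : ℕ, m = 4 * T x + T y + T z := by
  have hw : Odd w := by
    by_contra hw
    have : Even (8 * m + 6) := by grind
    rw [h] at this
    simp [Nat.even_add, parity_simps, hu] at this
    grind
  obtain ⟨s, rfl⟩ := hu.two_dvd
  obtain ⟨y, rfl⟩ := hv
  obtain ⟨z, rfl⟩ := hw
  have hy := two_mul_T y
  have hz := two_mul_T z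
  rcases Nat.even_or_odd' s with ⟨x, rfl | rfl⟩
  · exfalso
    ring_nf at h hy hz
    lia
  · refine ⟨x, y, z, ?_⟩
    have hx := two_mul_T x
    nlinarith

theorem stmt_5 (m : ℕ) : ∃ x y z : ℕ, m = 4 * T x + T y + T z := by
  obtain ⟨u, v, w, h⟩ := sum_three_squares_of_mod_four_eq_two_s5 (n := 8 * m + 6) (by lia)
  have h' : 8 * m + 6 = u.natAbs ^ 2 + v.natAbs ^ 2 + w.natAbs ^ 2 := by
    zify
    simpa using h
  generalize u.natAbs = u at h'
  generalize v.natAbs = v at h'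
  generalize w.natAbs = w at h'
  rcases Nat.even_or_odd u with hu | hu <;> rcases Nat.even_or_odd v with hv | hv
  · exfalso
    obtain ⟨a, rfl⟩ := hu
    obtain ⟨b, rfl⟩ := hv
    rcases Nat.even_or_odd' w with ⟨c, rfl | rfl⟩ <;> ring_nf at h' <;> lia
  · exact exists_triangular_of_sum_three_squares h' hu hv
  · exact exists_triangular_of_sum_three_squares (by linarith) hv hu
  · refine exists_triangular_of_sum_three_squares (u := w) (v := u) (w := v) (by linarith) ?_ hu
    by_contra hw
    have : Even (8 * m + 6) := by grind
    rw [h'] at this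
    simp [parity_simps] at this
    grind
end

section
/- If n is a non-negative integer such that 8n + 3 is divisible by 25, by 169, or by 61² = 3721, then n can be written as n = T_x + T_y + T_z where x and y have different parity. -/
/-- Gauss reduction: a positive definite binary form properly represents an integer that is small
relative to the determinant of the form. -/
theorem exists_unimodular_reduced_binary (A B C : ℤ) (hA : 0 < A) (hD : 0 < A * C - B ^ 2) :
    ∃ p q r s : ℤ, p * s - q * r = 1 ∧ 0 < A * p ^ 2 + 2 * B * p * r + C * r ^ 2 ∧
      3 * (A * p ^ 2 + 2 * B * p * r + C * r ^ 2) ^ 2 ≤ 4 * (A * C - B ^ 2) := by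
  induction hm : A.toNat using Nat.strong_induction_on generalizing A B C with
  | _ m ih =>
    obtain ⟨k, hk₁, hk₂⟩ : ∃ k : ℤ, -A ≤ 2 * (B + k * A) ∧ 2 * (B + k * A) ≤ A := by
      refine ⟨-((2 * B + A) / (2 * A)), ?_, ?_⟩
      · have := Int.mul_ediv_self_le (x := 2 * B + A) (k := 2 * A) (by positivity)
        linarith
      · have := Int.lt_mul_ediv_self_add (x := 2 * B + A) (k := 2 * A) (by positivity)
        linarith
    have hdet : A * (C + 2 * k * B + k ^ 2 * A) - (B + k * A) ^ 2 = A * C - B ^ 2 := by ring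
    by_cases hle : A ≤ C + 2 * k * B + k ^ 2 * A
    · refine ⟨1, 0, 0, 1, by norm_num, by simpa using hA, ?_⟩
      have h₁ : A * A ≤ A * (C + 2 * k * B + k ^ 2 * A) := mul_le_mul_of_nonneg_left hle hA.le
      have h₂ : (2 * (B + k * A)) ^ 2 ≤ A ^ 2 := sq_le_sq' hk₁ hk₂
      nlinarith
    · have hC : 0 < C + 2 * k * B + k ^ 2 * A := by
        by_contra! hneg
        nlinarith [mul_nonneg hA.le (neg_nonneg.mpr hneg), sq_nonneg (B + k * A)]
      obtain ⟨p, q, r, s, h₁, h₂, h₃⟩ :=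
        ih (C + 2 * k * B + k ^ 2 * A).toNat (by omega) _ (-(B + k * A)) A hC
          (by linarith) rfl
      have hval : A * (k * p - r) ^ 2 + 2 * B * (k * p - r) * p + C * p ^ 2 =
          (C + 2 * k * B + k ^ 2 * A) * p ^ 2 + 2 * -(B + k * A) * p * r + A * r ^ 2 := by ring
      refine ⟨k * p - r, k * q - s, p, q, by linear_combination h₁, ?_, ?_⟩
      · rw [hval]; exact h₂
      · rw [hval]; linarith

/-- A positive definite integral ternary form of determinant one takes only values that are sums
of three squares. -/
theorem ternary_form_eq_sum_three_sq (a b c d e f : ℤ) (ha : 0 < a) (hab : 0 < a * b - f ^ 2)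
    (hdet : a * b * c + 2 * d * e * f - a * d ^ 2 - b * e ^ 2 - c * f ^ 2 = 1) (x y z : ℤ) :
    ∃ u v w : ℤ, a * x ^ 2 + b * y ^ 2 + c * z ^ 2 + 2 * d * y * z + 2 * e * x * z +
      2 * f * x * y = u ^ 2 + v ^ 2 + w ^ 2 := by
  induction hm : a.toNat using Nat.strong_induction_on generalizing a b c d e f x y z with
  | _ m ih =>
    have hG : (a * b - f ^ 2) * (a * c - e ^ 2) - (a * d - e * f) ^ 2 = a := by
      linear_combination a * hdet
    obtain ⟨p, q, r, s, hps, hpos, hsmall⟩ :=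
      exists_unimodular_reduced_binary (a * b - f ^ 2) (a * d - e * f) (a * c - e ^ 2) hab
        (by rw [hG]; exact ha)
    rw [hG] at hsmall
    set g := (a * b - f ^ 2) * p ^ 2 + 2 * (a * d - e * f) * p * r + (a * c - e ^ 2) * r ^ 2
      with hg
    obtain ⟨k, hk₁, hk₂⟩ : ∃ k : ℤ, -a ≤ 2 * (f * p + e * r + k * a) ∧
        2 * (f * p + e * r + k * a) ≤ a := by
      refine ⟨-((2 * (f * p + e * r) + a) / (2 * a)), ?_, ?_⟩
      · have := Int.mul_ediv_self_le (x := 2 * (f * p + e * r) + a) (k := 2 * a) (by positivity)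
        linarith
      · have := Int.lt_mul_ediv_self_add (x := 2 * (f * p + e * r) + a) (k := 2 * a)
          (by positivity)
        linarith
    obtain ⟨f', hf'⟩ : ∃ f', f' = f * p + e * r + k * a := ⟨_, rfl⟩
    obtain ⟨e', he'⟩ : ∃ e', e' = f * q + e * s := ⟨_, rfl⟩
    obtain ⟨d', hd'⟩ : ∃ d', d' = b * p * q + d * (p * s + q * r) + c * r * s + k * e' :=
      ⟨_, rfl⟩
    obtain ⟨c', hc'⟩ : ∃ c', c' = b * q ^ 2 + 2 * d * q * s + c * s ^ 2 := ⟨_, rfl⟩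
    obtain ⟨b', hb'⟩ : ∃ b', b' = b * p ^ 2 + 2 * d * p * r + c * r ^ 2 +
        2 * k * (f * p + e * r) + k ^ 2 * a := ⟨_, rfl⟩
    rw [← hf'] at hk₁ hk₂
    have hg' : a * b' - f' ^ 2 = g := by rw [hb', hf', hg]; ring
    have hdet' : a * b' * c' + 2 * d' * e' * f' - a * d' ^ 2 - b' * e' ^ 2 - c' * f' ^ 2 = 1 := by
      have : a * b' * c' + 2 * d' * e' * f' - a * d' ^ 2 - b' * e' ^ 2 - c' * f' ^ 2 =
          (a * b * c + 2 * d * e * f - a * d ^ 2 - b * e ^ 2 - c * f ^ 2) *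
            (p * s - q * r) ^ 2 := by
        rw [hb', hc', hd', he', hf']; ring
      rw [this, hdet, hps]; norm_num
    have hval : a * x ^ 2 + b * y ^ 2 + c * z ^ 2 + 2 * d * y * z + 2 * e * x * z +
        2 * f * x * y =
        a * (x - k * (s * y - q * z)) ^ 2 + b' * (s * y - q * z) ^ 2 +
          c' * (p * z - r * y) ^ 2 + 2 * d' * (s * y - q * z) * (p * z - r * y) +
          2 * e' * (x - k * (s * y - q * z)) * (p * z - r * y) +
          2 * f' * (x - k * (s * y - q * z)) * (s * y - q * z) := by
      have hy : p * (s * y - q * z) + q * (p * z - r * y) = y := by linear_combination y * hps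
      have hz : r * (s * y - q * z) + s * (p * z - r * y) = z := by linear_combination z * hps
      generalize s * y - q * z = y' at *
      generalize p * z - r * y = z' at *
      rw [← hy, ← hz, hb', hc', hd', he', hf']; ring
    have hb'pos : 0 < b' := by
      by_contra! hneg
      have h₁ := mul_nonneg ha.le (neg_nonneg.mpr hneg)
      have h₂ := sq_nonneg f'
      rw [mul_neg] at h₁
      omega
    by_cases hlt : b' < a
    · obtain ⟨u, v, w, h⟩ := ih b'.toNat (by omega) b' a c' e' d' f' hb'pos
        (by rw [mul_comm, hg']; exact hpos) (by rw [← hdet']; ring) (s * y - q * z) (x - k * (s * y - q * z))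
        (p * z - r * y) rfl
      exact ⟨u, v, w, by rw [hval, ← h]; ring⟩
    · have h₁ : a * a ≤ a * b' := mul_le_mul_of_nonneg_left (not_lt.mp hlt) ha.le
      have h₂ : (2 * f') ^ 2 ≤ a ^ 2 := sq_le_sq' hk₁ hk₂
      have h₃ : 3 * a ^ 2 ≤ 4 * g := by
        rw [← hg']
        clear * - h₁ h₂
        linarith
      have ha1 : a = 1 := by
        by_contra hne
        have ha2 : 2 ≤ a := by omega
        have h₄ : (3 * a ^ 2) ^ 2 ≤ (4 * g) ^ 2 := pow_le_pow_left₀ (by positivity) h₃ 2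
        have h₅ : 2 ^ 3 * a ≤ a ^ 3 * a :=
          mul_le_mul_of_nonneg_right (pow_le_pow_left₀ (by norm_num) ha2 3) ha.le
        clear * - h₄ h₅ hsmall ha
        linarith
      subst ha1
      have hf0 : f' = 0 := by omega
      have hb1 : b' = 1 := by
        subst hf0
        have : g = b' := by linarith
        rw [this] at hsmall
        clear * - hsmall hb'pos
        nlinarith
      subst hf0 hb1
      refine ⟨x - k * (s * y - q * z) + e' * (p * z - r * y),
        s * y - q * z + d' * (p * z - r * y), p * z - r * y, ?_⟩
      rw [hval]
      linear_combination (p * z - r * y) ^ 2 * hdet'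

/-- For `n` congruent to `3` modulo `8` there is some `d > 0` such that `-d` is a quadratic
residue modulo `d * n - 1`. -/
theorem exists_sq_add_eq_mul_sub_one (n : ℕ) (hn : n % 8 = 3) :
    ∃ d a s : ℤ, 0 < d ∧ 0 < d * n - 1 ∧ s ^ 2 + d = a * (d * n - 1) := by
  have hcop : Nat.Coprime ((n - 1) / 2) (4 * n) := by
    obtain ⟨j, rfl⟩ : ∃ j, n = 8 * j + 3 := ⟨n / 8, by omega⟩
    have : (8 * j + 3 - 1) / 2 = 4 * j + 1 := by omega
    rw [this]
    refine Nat.Coprime.mul_right ?_ ?_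
    · rw [show 4 = 2 ^ 2 by norm_num]
      exact Nat.Coprime.pow_right 2 (Nat.coprime_two_right.mpr ⟨2 * j, by ring⟩)
    · rw [show 8 * j + 3 = 1 + 2 * (4 * j + 1) by ring]
      simp
  have hne : 4 * n ≠ 0 := by omega
  obtain ⟨p, hgt, hp, hmod⟩ := Nat.forall_exists_prime_gt_and_modEq n hne hcop
  obtain ⟨j, hj⟩ : 4 * n ∣ p - (n - 1) / 2 := (Nat.modEq_iff_dvd' (by omega)).mp hmod.symm
  have hpj : p = 4 * n * j + (n - 1) / 2 := by omega
  have hp4 : p % 4 = 1 := by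
    rw [hpj, mul_assoc]
    omega
  have hdn : 2 * p + 1 = (8 * j + 1) * n := by
    have : 2 * ((n - 1) / 2) + 1 = n := by omega
    rw [hpj]
    linarith
  have := Fact.mk hp
  set d := 8 * j + 1 with hd
  have hdodd : Odd d := ⟨4 * j, by omega⟩
  have hd8 : d % 8 = 1 := by omega
  have hpodd : Odd p := Nat.odd_iff.mpr (by omega)
  have hneg2 : jacobiSym (-2) d = 1 := by
    rw [jacobiSym.at_neg_two hdodd, ZMod.χ₈'_nat_eq_if_mod_eight]
    simp [hd8, Nat.odd_iff.mp hdodd]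
  have hmul : jacobiSym (-2 * p) d = 1 := by
    have hdiv : (-2 * p : ℤ) % d = 1 % d := by
      refine (Int.modEq_iff_dvd.mpr ⟨n, ?_⟩ : -2 * p ≡ 1 [ZMOD d])
      have : (2 * p + 1 : ℤ) = d * n := by exact_mod_cast hdn
      linarith
    rw [jacobiSym.mod_left, hdiv, ← jacobiSym.mod_left, jacobiSym.one_left]
  have hpd : jacobiSym p d = 1 := by
    rwa [jacobiSym.mul_left, hneg2, one_mul] at hmul
  have hdp : jacobiSym (-(d : ℤ)) p = 1 := by
    rw [jacobiSym.neg _ hpodd, ZMod.χ₄_nat_one_mod_four hp4, one_mul,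
      ← jacobiSym.quadratic_reciprocity_one_mod_four hp4 hdodd]
    exact hpd
  rw [← jacobiSym.legendreSym.to_jacobiSym] at hdp
  have hd0 : ((-(d : ℤ) : ℤ) : ZMod p) ≠ 0 := by
    intro h0
    rw [(legendreSym.eq_zero_iff p _).mpr h0] at hdp
    exact zero_ne_one hdp
  obtain ⟨t, ht⟩ := (legendreSym.eq_one_iff p hd0).mp hdp
  obtain ⟨t, rfl⟩ := ZMod.intCast_surjective t
  have htp : (p : ℤ) ∣ t ^ 2 + d := by
    rw [← ZMod.intCast_zmod_eq_zero_iff_dvd]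
    push_cast at ht ⊢
    linear_combination -ht
  have hdn' : (d * n - 1 : ℤ) = 2 * p := by
    have : (2 * p + 1 : ℤ) = d * n := by exact_mod_cast hdn
    linarith
  obtain ⟨s, hsodd, hsp⟩ : ∃ s : ℤ, Odd s ∧ (p : ℤ) ∣ s ^ 2 + d := by
    rcases Int.even_or_odd t with heven | hodd
    · refine ⟨t + p, heven.add_odd (by exact_mod_cast hpodd), ?_⟩
      rw [show (t + p) ^ 2 + (d : ℤ) = t ^ 2 + d + p * (2 * t + p) by ring]
      exact dvd_add htp (dvd_mul_right _ _)
    · exact ⟨t, hodd, htp⟩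
  have hs2 : (2 : ℤ) ∣ s ^ 2 + d := by
    have hd' : Odd (d : ℤ) := by exact_mod_cast hdodd
    exact (hsodd.pow.add_odd hd').two_dvd
  have hcop2 : IsCoprime (2 : ℤ) p := by
    rw [← Nat.cast_two, Nat.isCoprime_iff_coprime]
    exact Nat.coprime_two_left.mpr hpodd
  obtain ⟨a, ha⟩ := hcop2.mul_dvd hs2 hsp
  refine ⟨d, a, s, by exact_mod_cast (by omega : 0 < d), ?_, ?_⟩
  · rw [hdn']
    exact_mod_cast (by omega : 0 < 2 * p)
  · rw [hdn', ha, mul_comm]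

/-- Gauss: a number congruent to `3` modulo `8` is a sum of three squares. -/
theorem exists_sum_three_sq_of_mod_eight_eq_three (n : ℕ) (hn : n % 8 = 3) :
    ∃ x y z : ℕ, n = x ^ 2 + y ^ 2 + z ^ 2 := by
  obtain ⟨d, a, s, hd, hdn, hs⟩ := exists_sq_add_eq_mul_sub_one n hn
  have ha : 0 < a := by
    have : 0 < a * (d * n - 1) := by
      rw [← hs]; positivity
    exact pos_of_mul_pos_left this hdn.le
  obtain ⟨u, v, w, h⟩ := ternary_form_eq_sum_three_sq a (d * n - 1) n 0 1 s ha
    (by linarith) (by linear_combination -(n : ℤ) * hs) 0 0 1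
  refine ⟨u.natAbs, v.natAbs, w.natAbs, ?_⟩
  zify
  simpa using h

/-- A number congruent to `3` modulo `8` is a sum of three odd squares. -/
theorem exists_sum_three_odd_sq_of_mod_eight_eq_three (n : ℕ) (hn : n % 8 = 3) :
    ∃ x y z : ℕ, n = x ^ 2 + y ^ 2 + z ^ 2 ∧ x % 2 = 1 ∧ y % 2 = 1 ∧ z % 2 = 1 := by
  obtain ⟨x, y, z, h⟩ := exists_sum_three_sq_of_mod_eight_eq_three n hn
  have key : ∀ t : ℕ, t % 2 = 1 ∧ t ^ 2 % 8 = 1 ∨ t % 2 = 0 ∧ t ^ 2 % 4 = 0 := by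
    intro t
    have h8 : t % 8 < 8 := Nat.mod_lt _ (by norm_num)
    have h₁ : t ^ 2 % 8 = (t % 8) ^ 2 % 8 := Nat.pow_mod _ _ _
    generalize hr : t % 8 = r at *
    interval_cases r <;> omega
  have hx := key x
  have hy := key y
  have hz := key z
  exact ⟨x, y, z, h, by omega, by omega, by omega⟩

/-- Three odd squares whose roots are not all congruent modulo `4` give triangular numbers with
indices of different parity. -/
theorem exists_triangular_of_odd_sq (n x y z : ℕ) (h : 8 * n + 3 = x ^ 2 + y ^ 2 + z ^ 2)
    (hz : z % 2 = 1) (hxy : x % 4 = 1 ∧ y % 4 = 3 ∨ x % 4 = 3 ∧ y % 4 = 1) :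
    ∃ x y z : ℕ, n = T x + T y + T z ∧ x % 2 ≠ y % 2 := by
  have key : ∀ t : ℕ, t % 2 = 1 → t ^ 2 = 8 * T (t / 2) + 1 := by
    intro t ht
    obtain ⟨k, rfl⟩ : ∃ k, t = 2 * k + 1 := ⟨t / 2, by omega⟩
    have hk : (2 * k + 1) / 2 = k := by omega
    have heven : k * (k + 1) / 2 * 2 = k * (k + 1) :=
      Nat.div_mul_cancel (Nat.even_mul_succ_self k).two_dvd
    rw [hk, T]
    linarith
  refine ⟨x / 2, y / 2, z / 2, ?_, by omega⟩
  rw [key x (by omega), key y (by omega), key z hz] at h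
  omega

/-- Rotating a sum of three odd squares by the Gaussian integer `c + d * I` of norm `p ^ 2`. -/
theorem exists_triangular_of_rotation (n p c d x y z : ℕ) (hpcd : p ^ 2 = c ^ 2 + d ^ 2)
    (hp : p % 4 = 1) (hd : d % 4 = 0) (h : 8 * n + 3 = p ^ 2 * (x ^ 2 + y ^ 2 + z ^ 2))
    (hx : x % 2 = 1) (hy : y % 2 = 1) (hz : z % 2 = 1)
    (hc : c % 4 = 3 ∨ c % 4 = 1 ∧ c < d) :
    ∃ x y z : ℕ, n = T x + T y + T z ∧ x % 2 ≠ y % 2 := by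
  have hpmod : ∀ t : ℕ, p * t % 4 = t % 4 := fun t => by
    rw [Nat.mul_mod, hp, one_mul, Nat.mod_mod]
  have hdmod : ∀ t : ℕ, (d * t) % 4 = 0 := fun t => by rw [Nat.mul_mod, hd, zero_mul, Nat.zero_mod]
  by_cases hxy : x % 4 = y % 4
  swap
  · refine exists_triangular_of_odd_sq n (p * x) (p * y) (p * z) (by rw [h]; ring) ?_ ?_
    · have := hpmod z; omega
    · rw [hpmod, hpmod]; omega
  by_cases hxz : x % 4 = z % 4
  swap
  · refine exists_triangular_of_odd_sq n (p * x) (p * z) (p * y) (by rw [h]; ring) ?_ ?_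
    · have := hpmod y; omega
    · rw [hpmod, hpmod]; omega
  have hpx := hpmod x
  rcases hc with hc | ⟨hc, hcd⟩
  · have hcmod : ∀ t : ℕ, c * t % 4 = 3 * t % 4 := fun t => by
      rw [Nat.mul_mod, hc, Nat.mul_mod 3 t]
    have hcy := hcmod y
    have hcz := hcmod z
    have hdy := hdmod y
    have hdz := hdmod z
    refine exists_triangular_of_odd_sq n (p * x) (c * y + d * z)
      (d * y - c * z : ℤ).natAbs ?_ ?_ ?_
    · zify at h hpcd ⊢
      rw [sq_abs, h]
      linear_combination (y ^ 2 + z ^ 2 : ℤ) * hpcd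
    · have : ((d * y : ℕ) - (c * z : ℕ) : ℤ).natAbs % 2 = 1 := by omega
      exact_mod_cast this
    · omega
  · have hcmod : ∀ t : ℕ, c * t % 4 = t % 4 := fun t => by
      rw [Nat.mul_mod, hc, one_mul, Nat.mod_mod]
    wlog hzy : z ≤ y generalizing y z
    · exact this z y (by rw [h]; ring) hz hy hxz hxy (by omega)
    have hcy := hcmod y
    have hcz := hcmod z
    have hdy := hdmod y
    have hdz := hdmod z
    have hlt : c * z < d * y :=
      (Nat.mul_le_mul_left c hzy).trans_lt (Nat.mul_lt_mul_of_pos_right hcd (by omega))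
    refine exists_triangular_of_odd_sq n (p * x) (d * y - c * z) (c * y + d * z) ?_ ?_ ?_
    · zify [hlt.le] at h hpcd ⊢
      rw [h]
      linear_combination (y ^ 2 + z ^ 2 : ℤ) * hpcd
    · omega
    · omega

theorem stmt_11 (n : ℕ)
    (h : 25 ∣ 8 * n + 3 ∨ 169 ∣ 8 * n + 3 ∨ 3721 ∣ 8 * n + 3) :
    ∃ x y z : ℕ, n = T x + T y + T z ∧ x % 2 ≠ y % 2 := by
  rcases h with ⟨k, hk⟩ | ⟨k, hk⟩ | ⟨k, hk⟩ <;>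
    obtain ⟨x, y, z, rfl, hx, hy, hz⟩ :=
      exists_sum_three_odd_sq_of_mod_eight_eq_three k (by omega)
  · exact exists_triangular_of_rotation n 5 3 4 x y z (by norm_num) (by norm_num) (by norm_num)
      hk hx hy hz (by norm_num)
  · exact exists_triangular_of_rotation n 13 5 12 x y z (by norm_num) (by norm_num) (by norm_num)
      hk hx hy hz (by norm_num)
  · exact exists_triangular_of_rotation n 61 11 60 x y z (by norm_num) (by norm_num) (by norm_num)
      hk hx hy hz (by norm_num)
end
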